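/- arXiv:2306.07008 — 14 statements merged into one kernel-verified Lean document; each statement's English description precedes it below -/
import Mathlib

section
/- For every positive integer N and every real number ν, the Dirichlet kernel satisfies 1 − D_N(ν) ≤ π²ν²/6, and consequently 1 − D_N(ν)² ≤ π²ν²/3. -/
/-- The Dirichlet kernel `D_N(ν) = (1/N) ∑_{m=0}^{N-1} cos(π ν (2m+1-N)/N)`. -/
noncomputable def dirichlet (N : ℕ) (ν : ℝ) : ℝ :=
  (1 / (N : ℝ)) * ∑ m ∈ Finset.range N,
    Real.cos (Real.pi * ν * (2 * (m : ℝ) + 1 - (N : ℝ)) / (N : ℝ))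

/-- For every positive integer `N` and real `ν`, `1 - D_N(ν) ≤ π²ν²/6` and
consequently `1 - D_N(ν)² ≤ π²ν²/3`. -/
theorem dirichlet_one_sub_le (N : ℕ) (hN : 0 < N) (ν : ℝ) :
    1 - dirichlet N ν ≤ Real.pi ^ 2 * ν ^ 2 / 6 ∧
    1 - (dirichlet N ν) ^ 2 ≤ Real.pi ^ 2 * ν ^ 2 / 3 := by
  have hN' : (0 : ℝ) < N := by exact_mod_cast hN
  have hsum : ∀ (n : ℕ) (c : ℝ), ∑ m ∈ Finset.range n, (2 * (m : ℝ) + 1 - c) ^ 2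
      = n * (4 * (n : ℝ) ^ 2 - 1) / 3 - 2 * c * (n : ℝ) ^ 2 + c ^ 2 * n := by
    intro n c
    induction n with
    | zero => simp
    | succ k ih =>
      rw [Finset.sum_range_succ, ih]
      push_cast
      ring
  have h1 : 1 - dirichlet N ν ≤ Real.pi ^ 2 * ν ^ 2 / 6 := by
    have hlow : ∑ m ∈ Finset.range N,
        (1 - (Real.pi * ν / N) ^ 2 / 2 * (2 * (m : ℝ) + 1 - (N : ℝ)) ^ 2) ≤
        ∑ m ∈ Finset.range N,
          Real.cos (Real.pi * ν * (2 * (m : ℝ) + 1 - (N : ℝ)) / (N : ℝ)) := by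
      apply Finset.sum_le_sum
      intro m _
      refine le_trans (le_of_eq ?_) (Real.one_sub_sq_div_two_le_cos)
      ring
    rw [Finset.sum_sub_distrib, ← Finset.mul_sum, hsum] at hlow
    simp only [Finset.sum_const, Finset.card_range, nsmul_eq_mul, mul_one] at hlow
    have h2 := mul_le_mul_of_nonneg_left hlow (by positivity : (0 : ℝ) ≤ 1 / (N : ℝ))
    have h3 : 1 / (N : ℝ) * ((N : ℝ) - (Real.pi * ν / N) ^ 2 / 2 *
        (N * (4 * (N : ℝ) ^ 2 - 1) / 3 - 2 * N * (N : ℝ) ^ 2 + (N : ℝ) ^ 2 * N))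
        = 1 - Real.pi ^ 2 * ν ^ 2 / 6 + (Real.pi * ν / N) ^ 2 / 6 := by
      field_simp
      ring
    rw [h3] at h2
    have h4 : 0 ≤ (Real.pi * ν / N) ^ 2 / 6 := by positivity
    unfold dirichlet
    linarith
  refine ⟨h1, ?_⟩
  nlinarith [sq_nonneg (1 - dirichlet N ν)]
end

section
/- For every positive integer N, every integer n, and every real ν with |ν| ≤ 1/2, if 0 < |n + ν| ≤ N/2 then |D_N(n + ν)| ≤ π|ν| / (2|n + ν|). -/
/-- For every positive integer `N`, integer `n`, and real `ν` with `|ν| ≤ 1/2`,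
if `0 < |n + ν| ≤ N/2` then `|D_N(n + ν)| ≤ π|ν| / (2|n + ν|)`. -/
theorem abs_dirichlet_le (N : ℕ) (hN : 0 < N) (n : ℤ) (ν : ℝ) (hν : |ν| ≤ 1 / 2)
    (hpos : 0 < |(n : ℝ) + ν|) (hle : |(n : ℝ) + ν| ≤ (N : ℝ) / 2) :
    |dirichlet N ((n : ℝ) + ν)| ≤ Real.pi * |ν| / (2 * |(n : ℝ) + ν|) := by
  have hN' : (0 : ℝ) < N := by exact_mod_cast hN
  have hpi := Real.pi_pos
  set μ : ℝ := (n : ℝ) + ν with hμ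
  set x : ℝ := Real.pi * μ / N with hx
  have hxN : x * N = Real.pi * μ := by rw [hx]; field_simp
  have tel : ∀ M : ℕ, Real.sin x * ∑ m ∈ Finset.range M,
      Real.cos (Real.pi * μ * (2 * (m : ℝ) + 1 - (N : ℝ)) / (N : ℝ))
      = (Real.sin (x * (2 * M - N)) - Real.sin (x * (- N))) / 2 := by
    intro M
    induction M with
    | zero => simp
    | succ k ih =>
      rw [Finset.sum_range_succ, mul_add, ih]
      have e : Real.pi * μ * (2 * (k : ℝ) + 1 - (N : ℝ)) / (N : ℝ)
          = x * (2 * k + 1 - N) := by rw [hx]; ring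
      have e1 : x * (2 * ((k + 1 : ℕ) : ℝ) - N) = x * (2 * k + 1 - N) + x := by
        push_cast; ring
      have e2 : x * (2 * (k : ℝ) - N) = x * (2 * k + 1 - N) - x := by ring
      rw [e, e1, e2, Real.sin_add, Real.sin_sub]
      ring
  have key : Real.sin x * (N * dirichlet N μ) = Real.sin (Real.pi * μ) := by
    have h := tel N
    have e3 : x * (2 * (N : ℝ) - N) = Real.pi * μ := by rw [← hxN]; ring
    have e4 : x * (-(N : ℝ)) = -(Real.pi * μ) := by rw [← hxN]; ring
    rw [e3, e4, Real.sin_neg] at h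
    unfold dirichlet
    rw [← mul_assoc (N : ℝ), mul_one_div_cancel hN'.ne', one_mul, h]
    ring
  have habsx : |x| = Real.pi * |μ| / N := by
    rw [hx, abs_div, abs_mul, abs_of_pos hpi, abs_of_pos hN']
  have hx2 : |x| ≤ Real.pi / 2 := by
    rw [habsx, div_le_iff₀ hN']
    nlinarith
  have hs : 2 * |μ| / N ≤ |Real.sin x| := by
    have h := Real.mul_abs_le_abs_sin hx2
    rw [habsx] at h
    calc 2 * |μ| / N = 2 / Real.pi * (Real.pi * |μ| / N) := by field_simp
      _ ≤ _ := h
  have hnum : |Real.sin (Real.pi * μ)| ≤ Real.pi * |ν| := by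
    have e : Real.pi * μ = Real.pi * ν + n * Real.pi := by rw [hμ]; ring
    rw [e, Real.sin_add_int_mul_pi, abs_mul, abs_zpow]
    simp only [abs_neg, abs_one, one_zpow, one_mul]
    calc _ ≤ |Real.pi * ν| := Real.abs_sin_le_abs
      _ = _ := by rw [abs_mul, abs_of_pos hpi]
  rw [le_div_iff₀ (by positivity)]
  calc |dirichlet N μ| * (2 * |μ|) = (2 * |μ| / N) * (N * |dirichlet N μ|) := by field_simp
    _ ≤ |Real.sin x| * (N * |dirichlet N μ|) := by gcongr
    _ = |Real.sin (Real.pi * μ)| := by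
      rw [← key, abs_mul, abs_mul, abs_of_pos hN']
    _ ≤ _ := hnum
end

section
/- Fix a positive integer N and a real number ν. Then Σ_{n=0}^{N−1} D_N(n + ν)² = 1, and for every integer l with 1 ≤ l ≤ N − 1 one has Σ_{n=0}^{N−1} D_N(n + ν)·D_N(n + ν + l) = 0. -/
theorem sum_cos_zero (N : ℕ) (hN : 0 < N) (j : ℤ) (hj : ¬ (N : ℤ) ∣ j) (c : ℝ) :
    ∑ n ∈ Finset.range N, Real.cos (2 * Real.pi * j / N * n + c) = 0 := by
  have hN0 : (N : ℝ) ≠ 0 := by positivity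
  have hs : Real.sin (Real.pi * j / N) ≠ 0 := by
    intro h
    obtain ⟨k, hk⟩ := Real.sin_eq_zero_iff.1 h
    apply hj
    refine ⟨k, ?_⟩
    have h1 : Real.pi * (j : ℝ) = Real.pi * (N * k) := by
      field_simp at hk
      linear_combination -Real.pi * hk
    have h2 := mul_left_cancel₀ Real.pi_ne_zero h1
    exact_mod_cast h2
  have key : 2 * Real.sin (Real.pi * j / N) *
      ∑ n ∈ Finset.range N, Real.cos (2 * Real.pi * j / N * n + c) = 0 := by
    rw [Finset.mul_sum]
    have : ∀ n ∈ Finset.range N, 2 * Real.sin (Real.pi * j / N) *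
        Real.cos (2 * Real.pi * j / N * n + c) =
        (fun n : ℕ => Real.sin (2 * Real.pi * j / N * n + c - Real.pi * j / N)) (n + 1)
        - (fun n : ℕ => Real.sin (2 * Real.pi * j / N * n + c - Real.pi * j / N)) n := by
      intro n _
      have e : 2 * Real.pi * j / N * ((n + 1 : ℕ) : ℝ) + c - Real.pi * j / N
          = (2 * Real.pi * j / N * n + c) + Real.pi * j / N := by
        push_cast; ring
      simp only [e, Real.sin_add, Real.sin_sub]
      ring
    rw [Finset.sum_congr rfl this, Finset.sum_range_sub
      (fun n : ℕ => Real.sin (2 * Real.pi * j / N * n + c - Real.pi * j / N)) N]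
    have e : 2 * Real.pi * j / N * (N : ℝ) + c - Real.pi * j / N
        = (2 * Real.pi * j / N * ((0 : ℕ) : ℝ) + c - Real.pi * j / N) + j * (2 * Real.pi) := by
      field_simp
      push_cast
      ring
    simp only [e, Real.sin_add_int_mul_two_pi]
    ring
  exact (mul_eq_zero.1 key).resolve_left (mul_ne_zero two_ne_zero hs)

theorem sum_sin_zero (N : ℕ) (x : ℝ) :
    ∑ m ∈ Finset.range N,
      Real.sin (Real.pi * x * (2 * (m : ℝ) + 1 - (N : ℝ)) / (N : ℝ)) = 0 := by
  have h := Finset.sum_range_reflect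
    (fun m : ℕ => Real.sin (Real.pi * x * (2 * (m : ℝ) + 1 - (N : ℝ)) / (N : ℝ))) N
  have h2 : ∀ m ∈ Finset.range N,
      Real.sin (Real.pi * x * (2 * ((N - 1 - m : ℕ) : ℝ) + 1 - (N : ℝ)) / (N : ℝ))
      = - Real.sin (Real.pi * x * (2 * (m : ℝ) + 1 - (N : ℝ)) / (N : ℝ)) := by
    intro m hm
    have hm' := Finset.mem_range.1 hm
    have : ((N - 1 - m : ℕ) : ℝ) = N - 1 - m := by
      rw [Nat.cast_sub (by omega), Nat.cast_sub (by omega)]; simp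
    rw [this, ← Real.sin_neg]
    congr 1
    ring
  rw [Finset.sum_congr rfl h2, Finset.sum_neg_distrib] at h
  linarith

theorem dirichlet_mul (N : ℕ) (x y : ℝ) :
    dirichlet N x * dirichlet N y = (1 / (N : ℝ)) ^ 2 *
      ∑ m ∈ Finset.range N, ∑ k ∈ Finset.range N,
        Real.cos (Real.pi * x * (2 * (m : ℝ) + 1 - (N : ℝ)) / (N : ℝ) -
          Real.pi * y * (2 * (k : ℝ) + 1 - (N : ℝ)) / (N : ℝ)) := by
  simp only [Real.cos_sub, Finset.sum_add_distrib, ← Finset.mul_sum, ← Finset.sum_mul,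
    sum_sin_zero, dirichlet]
  ring

theorem dirichlet_corr (N : ℕ) (hN : 0 < N) (ν l : ℝ) :
    ∑ n ∈ Finset.range N, dirichlet N ((n : ℝ) + ν) * dirichlet N ((n : ℝ) + ν + l)
      = dirichlet N l := by
  have hN0 : (N : ℝ) ≠ 0 := by positivity
  simp only [dirichlet_mul]
  rw [← Finset.mul_sum, Finset.sum_comm]
  have h : ∀ m ∈ Finset.range N, ∑ n ∈ Finset.range N, ∑ k ∈ Finset.range N,
      Real.cos (Real.pi * ((n : ℝ) + ν) * (2 * (m : ℝ) + 1 - (N : ℝ)) / (N : ℝ) -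
          Real.pi * ((n : ℝ) + ν + l) * (2 * (k : ℝ) + 1 - (N : ℝ)) / (N : ℝ))
      = N * Real.cos (Real.pi * l * (2 * (m : ℝ) + 1 - (N : ℝ)) / (N : ℝ)) := by
    intro m hm
    rw [Finset.sum_comm, Finset.sum_eq_single_of_mem m hm]
    · have : ∀ n ∈ Finset.range N,
        Real.cos (Real.pi * ((n : ℝ) + ν) * (2 * (m : ℝ) + 1 - (N : ℝ)) / (N : ℝ) -
          Real.pi * ((n : ℝ) + ν + l) * (2 * (m : ℝ) + 1 - (N : ℝ)) / (N : ℝ))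
        = Real.cos (Real.pi * l * (2 * (m : ℝ) + 1 - (N : ℝ)) / (N : ℝ)) := by
        intro n _
        rw [← Real.cos_neg]
        congr 1
        ring
      rw [Finset.sum_congr rfl this]
      simp
    · intro k hk hkm
      have hm' := Finset.mem_range.1 hm
      have hk' := Finset.mem_range.1 hk
      rw [← sum_cos_zero N hN ((m : ℤ) - k) ?_
        (2 * Real.pi * ((m : ℝ) - k) / N * ν
          - Real.pi * l * (2 * (k : ℝ) + 1 - (N : ℝ)) / (N : ℝ))]
      · apply Finset.sum_congr rfl
        intro n _
        congr 1
        push_cast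
        ring
      · intro hd
        have := Int.eq_zero_of_abs_lt_dvd hd (by rw [abs_lt]; constructor <;> omega)
        omega
  rw [Finset.sum_congr rfl h, ← Finset.mul_sum, dirichlet]
  field_simp

/-- For a positive integer `N` and real `ν`: `∑_{n=0}^{N-1} D_N(n+ν)² = 1` and, for every
integer `l` with `1 ≤ l ≤ N-1`, `∑_{n=0}^{N-1} D_N(n+ν) D_N(n+ν+l) = 0`. -/
theorem dirichlet_orthogonality (N : ℕ) (hN : 0 < N) (ν : ℝ) :
    (∑ n ∈ Finset.range N, (dirichlet N ((n : ℝ) + ν)) ^ 2 = 1) ∧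
    (∀ l : ℕ, 1 ≤ l → l ≤ N - 1 →
      ∑ n ∈ Finset.range N,
        dirichlet N ((n : ℝ) + ν) * dirichlet N ((n : ℝ) + ν + (l : ℝ)) = 0) := by
  refine ⟨?_, ?_⟩
  · have h := dirichlet_corr N hN ν 0
    simp only [add_zero, ← pow_two] at h
    rw [h]
    have hN0 : (N : ℝ) ≠ 0 := by positivity
    simp [dirichlet, hN0]
  · intro l h1 h2
    rw [dirichlet_corr N hN ν l, dirichlet]
    have h := sum_cos_zero N hN l (by
      intro hd
      have := Nat.le_of_dvd (by omega) (Int.natCast_dvd_natCast.1 hd)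
      omega) (Real.pi * l * (1 - N) / N)
    rw [mul_eq_zero]
    right
    rw [← h]
    apply Finset.sum_congr rfl
    intro n _
    congr 1
    push_cast
    ring
end

section
/- For every integer N ≥ 100 and every real ν with 0 < |ν| ≤ 1/2, the tail of the Dirichlet kernel satisfies Σ_{k=1}^{N−1} |D_N(k + ν)| ≤ π²|ν|·ln N. Consequently ‖s_ν‖₁ ≤ |s_{ν,0}| + π²|ν|·ln N and ‖c_ν‖₁ ≤ |c_{ν,0}| + π²|ν|·ln N. -/
/-- The vector `s_ν ∈ ℝ^N`, `s_{ν,k} = sin(π_N (k+ν)) D_N(k+ν)` with `π_N = π(1-1/N)`. -/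
noncomputable def sVec (N : ℕ) (ν : ℝ) (k : ℕ) : ℝ :=
  Real.sin (Real.pi * (1 - 1 / (N : ℝ)) * ((k : ℝ) + ν)) * dirichlet N ((k : ℝ) + ν)

/-- The vector `c_ν ∈ ℝ^N`, `c_{ν,k} = cos(π_N (k+ν)) D_N(k+ν)` with `π_N = π(1-1/N)`. -/
noncomputable def cVec (N : ℕ) (ν : ℝ) (k : ℕ) : ℝ :=
  Real.cos (Real.pi * (1 - 1 / (N : ℝ)) * ((k : ℝ) + ν)) * dirichlet N ((k : ℝ) + ν)

lemma dk_sum (θ c : ℝ) (M : ℕ) :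
    2 * Real.sin θ * ∑ m ∈ Finset.range M, Real.cos (θ * (2 * (m : ℝ) + 1) - c)
      = Real.sin (2 * M * θ - c) + Real.sin c := by
  induction M with
  | zero => simp
  | succ n ih =>
    rw [Finset.sum_range_succ, mul_add, ih]
    have h1 : 2 * ((n + 1 : ℕ) : ℝ) * θ - c = (θ * (2 * (n : ℝ) + 1) - c) + θ := by
      push_cast; ring
    have h2 : 2 * (n : ℝ) * θ - c = (θ * (2 * (n : ℝ) + 1) - c) - θ := by ring
    rw [h1, h2, Real.sin_add, Real.sin_sub]
    ring

lemma dk_closed (N : ℕ) (hN : 0 < N) (x : ℝ) :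
    Real.sin (Real.pi * (x / N)) * (N * dirichlet N x) = Real.sin (Real.pi * x) := by
  have hN' : (N : ℝ) ≠ 0 := by positivity
  have h := dk_sum (Real.pi * (x / N)) (Real.pi * x) N
  have e : 2 * (N : ℝ) * (Real.pi * (x / N)) - Real.pi * x = Real.pi * x := by
    field_simp; ring
  rw [e] at h
  have e2 : (N : ℝ) * dirichlet N x = ∑ m ∈ Finset.range N,
      Real.cos (Real.pi * (x / N) * (2 * (m : ℝ) + 1) - Real.pi * x) := by
    unfold dirichlet
    rw [← mul_assoc, mul_one_div_cancel hN', one_mul]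
    apply Finset.sum_congr rfl
    intro m _
    congr 1
    field_simp
  rw [e2]; linarith

lemma dk_sin_lower (y : ℝ) (h0 : 0 ≤ y) (h1 : y ≤ 1) :
    2 * y * (1 - y) ≤ Real.sin (Real.pi * y) := by
  have hp := Real.pi_pos
  rcases le_total y (1 / 2) with h | h
  · have := Real.mul_le_sin (x := Real.pi * y) (by positivity) (by nlinarith)
    have e : 2 / Real.pi * (Real.pi * y) = 2 * y := by field_simp
    rw [e] at this
    nlinarith
  · have := Real.mul_le_sin (x := Real.pi * (1 - y)) (mul_nonneg hp.le (by linarith)) (by nlinarith)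
    have e : 2 / Real.pi * (Real.pi * (1 - y)) = 2 * (1 - y) := by field_simp
    have e2 : Real.pi * (1 - y) = Real.pi - Real.pi * y := by ring
    rw [e, e2, Real.sin_pi_sub] at this
    nlinarith

lemma dk_term (N : ℕ) (ν : ℝ) (hν : |ν| ≤ 1 / 2) (k : ℕ) (hk : 1 ≤ k) (hkN : k < N) :
    |dirichlet N ((k : ℝ) + ν)| ≤ Real.pi * |ν| * ((k : ℝ)⁻¹ + ((N - k : ℕ) : ℝ)⁻¹) := by
  have hcl := dk_closed N (by omega) ((k : ℝ) + ν)
  have hj : ((N - k : ℕ) : ℝ) = (N : ℝ) - k := by rw [Nat.cast_sub hkN.le]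
  have hk1 : (1 : ℝ) ≤ k := by exact_mod_cast hk
  have hj1 : (1 : ℝ) ≤ (N : ℝ) - k := by rw [← hj]; exact_mod_cast (by omega : 1 ≤ N - k)
  have hNp : (0 : ℝ) < N := by linarith
  obtain ⟨ha, hb⟩ := abs_le.mp hν
  rw [hj]
  set x : ℝ := (k : ℝ) + ν with hx
  have hs : |Real.sin (Real.pi * x)| ≤ Real.pi * |ν| := by
    have e : Real.pi * x = Real.pi * ν + k * Real.pi := by rw [hx]; ring
    rw [e, Real.sin_add_nat_mul_pi, abs_mul, abs_pow, abs_neg, abs_one, one_pow, one_mul]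
    refine Real.abs_sin_le_abs.trans ?_
    rw [abs_mul, abs_of_pos Real.pi_pos]
  have hlow := dk_sin_lower (x / N) (by apply div_nonneg <;> linarith)
    (by rw [div_le_one hNp]; linarith)
  set S := Real.sin (Real.pi * (x / N))
  have hlow2 : (k : ℝ) * (N - k) ≤ N * (N * S) := by
    have h3 : 2 * (x / N) * (1 - x / N) * (N * N) = 2 * (x * (N - x)) := by
      field_simp
    have h4 : (k : ℝ) * (N - k) ≤ 2 * (x * (N - x)) := by
      rcases le_total 0 ν with h | h
      · have : (k : ℝ) * ((N - k) / 2) ≤ x * (N - x) :=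
          mul_le_mul (by linarith) (by linarith) (by linarith) (by linarith)
        linarith
      · have : (k : ℝ) / 2 * (N - k) ≤ x * (N - x) :=
          mul_le_mul (by linarith) (by linarith) (by linarith) (by linarith)
        linarith
    have h5 := mul_le_mul_of_nonneg_right hlow (mul_nonneg hNp.le hNp.le)
    nlinarith
  have hkj : (0 : ℝ) < (k : ℝ) * (N - k) := mul_pos (by linarith) (by linarith)
  have hS : 0 ≤ S := by
    by_contra hneg
    have : N * (N * S) < 0 := mul_neg_of_pos_of_neg hNp (mul_neg_of_pos_of_neg hNp (not_le.mp hneg))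
    linarith
  rw [← hcl, abs_mul, abs_mul, abs_of_nonneg hS, abs_of_pos hNp] at hs
  have e : (k : ℝ)⁻¹ + ((N : ℝ) - k)⁻¹ = N / (k * (N - k)) := by
    have : (N : ℝ) - k ≠ 0 := by linarith
    have : (k : ℝ) ≠ 0 := by linarith
    field_simp
    ring
  rw [e, ← mul_div_assoc, le_div_iff₀ hkj]
  have h6 := mul_le_mul_of_nonneg_right hlow2 (abs_nonneg (dirichlet N x))
  have h7 := mul_le_mul_of_nonneg_right hs hNp.le
  linarith

lemma dk_tail (N : ℕ) (hN : 100 ≤ N) (ν : ℝ) (hν : |ν| ≤ 1 / 2) :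
    ∑ k ∈ Finset.Icc 1 (N - 1), |dirichlet N ((k : ℝ) + ν)|
        ≤ Real.pi ^ 2 * |ν| * Real.log N := by
  have h1 : ∑ k ∈ Finset.Icc 1 (N - 1), |dirichlet N ((k : ℝ) + ν)|
      ≤ ∑ k ∈ Finset.Icc 1 (N - 1), Real.pi * |ν| * ((k : ℝ)⁻¹ + ((N - k : ℕ) : ℝ)⁻¹) := by
    apply Finset.sum_le_sum
    intro k hk
    rw [Finset.mem_Icc] at hk
    exact dk_term N ν hν k hk.1 (by omega)
  rw [← Finset.mul_sum, Finset.sum_add_distrib] at h1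
  have h2 : ∑ k ∈ Finset.Icc 1 (N - 1), ((N - k : ℕ) : ℝ)⁻¹
      = ∑ k ∈ Finset.Icc 1 (N - 1), (k : ℝ)⁻¹ := by
    refine Finset.sum_nbij' (fun k => N - k) (fun k => N - k) ?_ ?_ ?_ ?_ ?_
    · intro k hk; simp only [Finset.mem_Icc] at *; omega
    · intro k hk; simp only [Finset.mem_Icc] at *; omega
    · intro k hk; simp only [Finset.mem_Icc] at *; omega
    · intro k hk; simp only [Finset.mem_Icc] at *; omega
    · intro k hk; rfl
  have h3 : ∑ k ∈ Finset.Icc 1 (N - 1), (k : ℝ)⁻¹ ≤ 1 + Real.log N := by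
    have := harmonic_le_one_add_log (N - 1)
    rw [harmonic_eq_sum_Icc] at this
    push_cast at this
    refine this.trans ?_
    gcongr
    · exact_mod_cast (by omega : 0 < N - 1)
    · omega
  have h4 : 2 ≤ Real.log N := by
    rw [Real.le_log_iff_exp_le (by exact_mod_cast (by omega : 0 < N))]
    have : Real.exp 2 = Real.exp 1 * Real.exp 1 := by rw [← Real.exp_add]; norm_num
    have h5 := Real.exp_one_lt_d9
    have h6 := Real.exp_pos 1
    have h7 : (100 : ℝ) ≤ N := by exact_mod_cast hN
    nlinarith
  rw [h2] at h1
  refine h1.trans ?_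
  have hp := Real.pi_gt_three
  have h8 : (∑ k ∈ Finset.Icc 1 (N - 1), (k : ℝ)⁻¹) + ∑ k ∈ Finset.Icc 1 (N - 1), (k : ℝ)⁻¹
      ≤ Real.pi * Real.log N := by nlinarith
  calc _ ≤ Real.pi * |ν| * (Real.pi * Real.log N) := by gcongr
    _ = _ := by ring

lemma dk_vec (N : ℕ) (hN : 100 ≤ N) (ν : ℝ) (hν : |ν| ≤ 1 / 2) (f v : ℕ → ℝ)
    (hf : ∀ k, |f k| ≤ 1) (hv : ∀ k, v k = f k * dirichlet N ((k : ℝ) + ν)) :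
    ∑ k ∈ Finset.range N, |v k| ≤ |v 0| + Real.pi ^ 2 * |ν| * Real.log N := by
  have e : Finset.range N = insert 0 (Finset.Icc 1 (N - 1)) := by
    ext k; simp only [Finset.mem_range, Finset.mem_insert, Finset.mem_Icc]; omega
  rw [e, Finset.sum_insert (by simp)]
  gcongr
  refine (Finset.sum_le_sum ?_).trans (dk_tail N hN ν hν)
  intro k _
  rw [hv, abs_mul]
  exact mul_le_of_le_one_left (abs_nonneg _) (hf k)

/-- For `N ≥ 100` and `0 < |ν| ≤ 1/2`, the Dirichlet-kernel tail satisfies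
`∑_{k=1}^{N-1} |D_N(k+ν)| ≤ π²|ν| ln N`, and consequently
`‖s_ν‖₁ ≤ |s_{ν,0}| + π²|ν| ln N` and `‖c_ν‖₁ ≤ |c_{ν,0}| + π²|ν| ln N`. -/
theorem dirichlet_tail_bound (N : ℕ) (hN : 100 ≤ N) (ν : ℝ)
    (hν0 : 0 < |ν|) (hν : |ν| ≤ 1 / 2) :
    (∑ k ∈ Finset.Icc 1 (N - 1), |dirichlet N ((k : ℝ) + ν)|
        ≤ Real.pi ^ 2 * |ν| * Real.log N) ∧
    (∑ k ∈ Finset.range N, |sVec N ν k| ≤ |sVec N ν 0| + Real.pi ^ 2 * |ν| * Real.log N) ∧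
    (∑ k ∈ Finset.range N, |cVec N ν k| ≤ |cVec N ν 0| + Real.pi ^ 2 * |ν| * Real.log N) := by
  exact ⟨dk_tail N hN ν hν,
    dk_vec N hN ν hν _ _ (fun _ => Real.abs_sin_le_one _) (fun _ => rfl),
    dk_vec N hN ν hν _ _ (fun _ => Real.abs_cos_le_one _) (fun _ => rfl)⟩
end

section
/- For every positive integer N and every real ν, Σ_{k=0}^{N−1} sin²(π_N(k + ν))·D_N(k + ν)² = (1 − 1/N)·sin²(πν); equivalently, ‖s_ν‖₂² = (1 − 1/N)·sin²(πν). -/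
theorem aux_tel (a t : ℝ) (n : ℕ) :
    2 * Real.sin t * ∑ m ∈ Finset.range n, Real.cos (a + 2 * m * t)
      = Real.sin (a + (2 * n - 1) * t) - Real.sin (a - t) := by
  induction n with
  | zero =>
    simp only [Finset.range_zero, Finset.sum_empty]
    push_cast
    ring_nf
  | succ n ih =>
    rw [Finset.sum_range_succ, mul_add, ih]
    have e1 : a + (2 * ((n + 1 : ℕ) : ℝ) - 1) * t = (a + 2 * n * t) + t := by push_cast; ring
    have e2 : a + (2 * (n : ℝ) - 1) * t = (a + 2 * n * t) - t := by ring
    rw [e1, e2, Real.sin_add (a + 2 * n * t), Real.sin_sub (a + 2 * n * t)]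
    ring

theorem aux_ker (t : ℝ) (n : ℕ) :
    Real.sin t * ∑ m ∈ Finset.range n, Real.cos ((2 * m + 1 - n) * t) = Real.sin (n * t) := by
  have h := aux_tel ((1 - n) * t) t n
  have e1 : (1 - (n : ℝ)) * t + (2 * n - 1) * t = n * t := by ring
  have e2 : (1 - (n : ℝ)) * t - t = -(n * t) := by ring
  rw [e1, e2, Real.sin_neg] at h
  have e3 : ∑ m ∈ Finset.range n, Real.cos ((2 * m + 1 - n) * t)
      = ∑ m ∈ Finset.range n, Real.cos ((1 - (n : ℝ)) * t + 2 * m * t) := by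
    refine Finset.sum_congr rfl fun m _ => ?_
    congr 1; ring
  rw [e3]; linarith

theorem aux_orth (N : ℕ) (hN : 0 < N) (ν : ℝ) (j : ℤ) (hj : |j| < N) :
    ∑ k ∈ Finset.range N, Real.cos (2 * j * (Real.pi * (k + ν) / N))
      = if j = 0 then (N : ℝ) else 0 := by
  have hN' : (N : ℝ) ≠ 0 := by positivity
  split_ifs with h0
  · simp [h0]
  · have h := aux_tel (2 * j * (Real.pi * ν / N)) (j * Real.pi / N) N
    have e1 : 2 * j * (Real.pi * ν / N) + (2 * (N : ℝ) - 1) * (j * Real.pi / N)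
        = (2 * j * (Real.pi * ν / N) - j * Real.pi / N) + j * (2 * Real.pi) := by
      field_simp; ring
    rw [e1, Real.sin_add_int_mul_two_pi, sub_self] at h
    have hs : Real.sin (j * Real.pi / N) ≠ 0 := by
      intro hs
      rw [Real.sin_eq_zero_iff] at hs
      obtain ⟨n, hn⟩ := hs
      have h1 : (n : ℝ) * N = j := by
        field_simp at hn
        linarith
      have h2 : n * (N : ℤ) = j := by exact_mod_cast h1
      exact h0 (Int.eq_zero_of_abs_lt_dvd ⟨n, by rw [← h2]; ring⟩ hj)
    have h3 := (mul_eq_zero.1 h).resolve_left (mul_ne_zero two_ne_zero hs)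
    rw [← h3]
    refine Finset.sum_congr rfl fun m _ => ?_
    congr 1; ring

theorem aux_sumsq (M : ℕ) (ν : ℝ) :
    ∑ k ∈ Finset.range (M + 1), (∑ m ∈ Finset.range M,
      Real.cos ((2 * m + 1 - M) * (Real.pi * (k + ν) / (M + 1 : ℕ)))) ^ 2
      = ((M + 1 : ℕ) : ℝ) * M := by
  have key : ∀ m ∈ Finset.range M, ∀ n ∈ Finset.range M,
      ∑ k ∈ Finset.range (M + 1),
        Real.cos ((2 * m + 1 - M) * (Real.pi * (k + ν) / (M + 1 : ℕ))) *
        Real.cos ((2 * n + 1 - M) * (Real.pi * (k + ν) / (M + 1 : ℕ)))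
      = (if n = m then ((M + 1 : ℕ) : ℝ) / 2 else 0)
        + (if n = M - 1 - m then ((M + 1 : ℕ) : ℝ) / 2 else 0) := by
    intro m hm n hn
    rw [Finset.mem_range] at hm hn
    have h1 := aux_orth (M + 1) (by omega) ν ((m : ℤ) - n) (by rw [abs_lt]; omega)
    have h2 := aux_orth (M + 1) (by omega) ν ((m : ℤ) + n + 1 - M) (by rw [abs_lt]; omega)
    have c1 : ((m : ℤ) - n = 0) ↔ n = m := by omega
    have c2 : ((m : ℤ) + n + 1 - M = 0) ↔ n = M - 1 - m := by omega
    simp only [c1] at h1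
    simp only [c2] at h2
    have e : ∀ k ∈ Finset.range (M + 1),
        Real.cos ((2 * m + 1 - M) * (Real.pi * (k + ν) / (M + 1 : ℕ))) *
        Real.cos ((2 * n + 1 - M) * (Real.pi * (k + ν) / (M + 1 : ℕ)))
        = (1 / 2) * Real.cos (2 * ((m : ℤ) - n : ℤ) * (Real.pi * (k + ν) / (M + 1 : ℕ)))
        + (1 / 2) * Real.cos (2 * ((m : ℤ) + n + 1 - M : ℤ) *
            (Real.pi * (k + ν) / (M + 1 : ℕ))) := by
      intro k _
      generalize Real.pi * (k + ν) / (M + 1 : ℕ) = t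
      have a1 : 2 * (((m : ℤ) - n : ℤ) : ℝ) * t
          = (2 * m + 1 - M) * t - (2 * n + 1 - M) * t := by push_cast; ring
      have a2 : 2 * (((m : ℤ) + n + 1 - M : ℤ) : ℝ) * t
          = (2 * m + 1 - M) * t + (2 * n + 1 - M) * t := by push_cast; ring
      rw [a1, a2, Real.cos_sub, Real.cos_add]
      ring
    rw [Finset.sum_congr rfl e, Finset.sum_add_distrib, ← Finset.mul_sum, ← Finset.mul_sum,
      h1, h2]
    split_ifs <;> ring
  simp only [sq, Finset.sum_mul_sum]
  rw [Finset.sum_comm]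
  have row : ∀ m ∈ Finset.range M, ∑ k ∈ Finset.range (M + 1), ∑ n ∈ Finset.range M,
        Real.cos ((2 * m + 1 - M) * (Real.pi * (k + ν) / (M + 1 : ℕ))) *
        Real.cos ((2 * n + 1 - M) * (Real.pi * (k + ν) / (M + 1 : ℕ)))
      = ((M + 1 : ℕ) : ℝ) := by
    intro m hm
    rw [Finset.sum_comm, Finset.sum_congr rfl (key m hm), Finset.sum_add_distrib,
      Finset.sum_ite_eq', Finset.sum_ite_eq', if_pos hm, if_pos]
    · ring
    · rw [Finset.mem_range] at *; omega
  rw [Finset.sum_congr rfl row]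
  rw [Finset.sum_const, Finset.card_range, nsmul_eq_mul, mul_comm]

/-- For every positive integer `N` and real `ν`,
`∑_{k=0}^{N-1} sin²(π_N(k+ν)) D_N(k+ν)² = (1 - 1/N) sin²(πν)`, i.e.
`‖s_ν‖₂² = (1 - 1/N) sin²(πν)` where `π_N = π(1-1/N)`. -/
theorem sVec_norm_sq (N : ℕ) (hN : 0 < N) (ν : ℝ) :
    ∑ k ∈ Finset.range N,
      (Real.sin (Real.pi * (1 - 1 / (N : ℝ)) * ((k : ℝ) + ν)))^2 *
        (dirichlet N ((k : ℝ) + ν))^2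
      = (1 - 1 / (N : ℝ)) * (Real.sin (Real.pi * ν))^2 := by
  obtain ⟨M, rfl⟩ : ∃ M, N = M + 1 := ⟨N - 1, by omega⟩
  have hN' : ((M + 1 : ℕ) : ℝ) ≠ 0 := by positivity
  have term : ∀ k ∈ Finset.range (M + 1),
      (Real.sin (Real.pi * (1 - 1 / ((M + 1 : ℕ) : ℝ)) * ((k : ℝ) + ν)))^2 *
        (dirichlet (M + 1) ((k : ℝ) + ν))^2
      = (Real.sin (Real.pi * ν) / ((M + 1 : ℕ) : ℝ))^2 * (∑ m ∈ Finset.range M,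
      Real.cos ((2 * m + 1 - M) * (Real.pi * (k + ν) / (M + 1 : ℕ)))) ^ 2 := by
    intro k _
    have b1 := aux_ker (Real.pi * (k + ν) / (M + 1 : ℕ)) M
    have b2 := aux_ker (Real.pi * (k + ν) / (M + 1 : ℕ)) (M + 1)
    have e1 : Real.pi * (1 - 1 / ((M + 1 : ℕ) : ℝ)) * ((k : ℝ) + ν)
        = M * (Real.pi * (k + ν) / (M + 1 : ℕ)) := by
      field_simp; push_cast; ring
    have e2 : ((M + 1 : ℕ) : ℝ) * (Real.pi * (k + ν) / (M + 1 : ℕ))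
        = Real.pi * ν + k * Real.pi := by
      field_simp; ring
    have e3 : dirichlet (M + 1) ((k : ℝ) + ν) = (1 / ((M + 1 : ℕ) : ℝ)) *
        ∑ m ∈ Finset.range (M + 1),
          Real.cos ((2 * m + 1 - (M + 1 : ℕ)) * (Real.pi * (k + ν) / (M + 1 : ℕ))) := by
      unfold dirichlet
      congr 1
      refine Finset.sum_congr rfl fun m _ => ?_
      congr 1; ring
    have e4 : Real.sin (Real.pi * ν + k * Real.pi) ^ 2 = Real.sin (Real.pi * ν) ^ 2 := by
      rw [Real.sin_add_nat_mul_pi, mul_pow, ← pow_mul, mul_comm k 2, pow_mul]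
      norm_num
    rw [e2] at b2
    rw [e1, e3, ← b1, div_pow, ← e4, ← b2]
    ring
  rw [Finset.sum_congr rfl term, ← Finset.mul_sum, aux_sumsq]
  field_simp
  push_cast
  ring
end

section
/- For every positive integer N and every real ν, Σ_{k=0}^{N−1} sin²(π(k + ν)/N)·D_N(k + ν)² = sin²(πν)/N. -/
/-- For every positive integer `N` and real `ν`,
`∑_{k=0}^{N-1} sin²(π(k+ν)/N) D_N(k+ν)² = sin²(πν)/N`. -/
theorem sin_sq_dirichlet_sum (N : ℕ) (hN : 0 < N) (ν : ℝ) :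
    ∑ k ∈ Finset.range N,
      (Real.sin (Real.pi * ((k : ℝ) + ν) / (N : ℝ)))^2 * (dirichlet N ((k : ℝ) + ν))^2
      = (Real.sin (Real.pi * ν))^2 / (N : ℝ) := by
  have hN0 : (N : ℝ) ≠ 0 := by positivity
  have key : ∀ x : ℝ, Real.sin (Real.pi * x / (N : ℝ)) * dirichlet N x
      = Real.sin (Real.pi * x) / (N : ℝ) := by
    intro x
    have tel : ∀ n : ℕ, 2 * Real.sin (Real.pi * x / (N : ℝ)) * ∑ m ∈ Finset.range n,
        Real.cos (Real.pi * x * (2 * (m : ℝ) + 1 - (N : ℝ)) / (N : ℝ))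
        = Real.sin (Real.pi * x / (N : ℝ) * (2 * (n : ℝ) - N))
          + Real.sin (Real.pi * x / (N : ℝ) * N) := by
      intro n
      induction n with
      | zero => simp
      | succ n ih =>
        rw [Finset.sum_range_succ, mul_add, ih]
        have e1 : Real.pi * x / (N : ℝ) * (2 * ((n + 1 : ℕ) : ℝ) - N)
            = Real.pi * x * (2 * (n : ℝ) + 1 - (N : ℝ)) / (N : ℝ) + Real.pi * x / (N : ℝ) := by
          push_cast; ring
        have e2 : Real.pi * x / (N : ℝ) * (2 * (n : ℝ) - N)
            = Real.pi * x * (2 * (n : ℝ) + 1 - (N : ℝ)) / (N : ℝ) - Real.pi * x / (N : ℝ) := by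
          ring
        rw [e1, e2, Real.sin_add, Real.sin_sub]
        ring
    have h := tel N
    have e3 : (2 * (N : ℝ) - N) = N := by ring
    rw [e3, div_mul_cancel₀ _ hN0] at h
    unfold dirichlet
    field_simp at h ⊢
    linarith
  have term : ∀ k ∈ Finset.range N,
      (Real.sin (Real.pi * ((k : ℝ) + ν) / (N : ℝ)))^2 * (dirichlet N ((k : ℝ) + ν))^2
      = (Real.sin (Real.pi * ν))^2 / (N : ℝ)^2 := by
    intro k _
    rw [← mul_pow, key, div_pow]
    have e : Real.pi * ((k : ℝ) + ν) = Real.pi * ν + k * Real.pi := by ring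
    rw [e, Real.sin_add_nat_mul_pi, mul_pow, ← pow_mul, mul_comm k 2, pow_mul]
    simp
  rw [Finset.sum_congr rfl term, Finset.sum_const, Finset.card_range, nsmul_eq_mul]
  field_simp
end

section
/- For every positive integer N and every real ν, Σ_{k=0}^{N−1} sin(π(k + ν)/N)·cos(π(k + ν)/N)·D_N(k + ν)² = sin(2πν)/(2N). -/
lemma aux_A (N : ℝ) (x : ℝ) (n : ℕ) :
    Real.sin x * ∑ m ∈ Finset.range n, Real.cos ((2 * (m : ℝ) + 1 - N) * x)
      = (Real.sin ((2 * (n : ℝ) - N) * x) + Real.sin (N * x)) / 2 := by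
  induction n with
  | zero => simp
  | succ n ih =>
    rw [Finset.sum_range_succ, mul_add, ih]
    have h1 : (2 * ((n + 1 : ℕ) : ℝ) - N) * x = (2 * (n : ℝ) + 1 - N) * x + x := by
      push_cast; ring
    have h2 : (2 * (n : ℝ) - N) * x = (2 * (n : ℝ) + 1 - N) * x - x := by ring
    rw [h1, h2, Real.sin_add, Real.sin_sub]
    ring

lemma aux_R (N : ℕ) (x : ℝ) :
    ∑ m ∈ Finset.range N, Real.sin ((2 * (m : ℝ) + 1 - N) * x) = 0 := by
  have h := Finset.sum_range_reflect (fun m : ℕ => Real.sin ((2 * (m : ℝ) + 1 - N) * x)) N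
  have h2 : ∑ j ∈ Finset.range N, Real.sin ((2 * ((N - 1 - j : ℕ) : ℝ) + 1 - N) * x)
      = - ∑ m ∈ Finset.range N, Real.sin ((2 * (m : ℝ) + 1 - N) * x) := by
    rw [← Finset.sum_neg_distrib]
    refine Finset.sum_congr rfl fun j hj => ?_
    have hj := Finset.mem_range.1 hj
    have : ((N - 1 - j : ℕ) : ℝ) = N - 1 - j := by
      rw [Nat.cast_sub (by omega), Nat.cast_sub (by omega)]; simp
    rw [this, ← Real.sin_neg]
    congr 1; ring
  linarith

lemma aux_B (N : ℕ) (x : ℝ) :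
    Real.sin (N * x) * Real.cos x * ∑ m ∈ Finset.range N, Real.cos ((2 * (m : ℝ) + 1 - N) * x)
      = ∑ m ∈ Finset.range N,
        (Real.sin (2 * ((m + 1 : ℕ) : ℝ) * x) + Real.sin (2 * (m : ℝ) * x)) / 2 := by
  have h : ∀ m ∈ Finset.range N,
      (Real.sin (2 * ((m + 1 : ℕ) : ℝ) * x) + Real.sin (2 * (m : ℝ) * x)) / 2
      = Real.sin (N * x) * Real.cos x * Real.cos ((2 * (m : ℝ) + 1 - N) * x)
        + Real.cos (N * x) * Real.cos x * Real.sin ((2 * (m : ℝ) + 1 - N) * x) := by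
    intro m _
    have h1 : 2 * ((m + 1 : ℕ) : ℝ) * x = (N * x + (2 * (m : ℝ) + 1 - N) * x) + x := by
      push_cast; ring
    have h2 : 2 * (m : ℝ) * x = (N * x + (2 * (m : ℝ) + 1 - N) * x) - x := by ring
    rw [h1, h2, Real.sin_add _ x, Real.sin_sub _ x, Real.sin_add (N * x)]
    ring
  rw [Finset.sum_congr rfl h, Finset.sum_add_distrib, ← Finset.mul_sum, ← Finset.mul_sum, aux_R]
  ring

lemma aux_T (θ ν : ℝ) (n : ℕ) :
    Real.sin θ * ∑ k ∈ Finset.range n, Real.sin (2 * θ * ((k : ℝ) + ν))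
      = (Real.cos (θ * (2 * ν - 1)) - Real.cos (θ * (2 * (n + ν) - 1))) / 2 := by
  induction n with
  | zero => simp
  | succ n ih =>
    rw [Finset.sum_range_succ, mul_add, ih]
    have h1 : θ * (2 * (((n + 1 : ℕ) : ℝ) + ν) - 1) = 2 * θ * ((n : ℝ) + ν) + θ := by
      push_cast; ring
    have h2 : θ * (2 * ((n : ℝ) + ν) - 1) = 2 * θ * ((n : ℝ) + ν) - θ := by ring
    rw [h1, h2, Real.cos_add, Real.cos_sub]
    ring

lemma aux_Z (N : ℕ) (ν : ℝ) (j : ℕ) (hj : j < N) :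
    ∑ k ∈ Finset.range N, Real.sin (2 * (j : ℝ) * (Real.pi * ((k : ℝ) + ν) / (N : ℝ))) = 0 := by
  rcases Nat.eq_zero_or_pos j with rfl | h0
  · simp
  have hN : (0 : ℝ) < N := by exact_mod_cast (by omega : 0 < N)
  have hj0 : (0 : ℝ) < j := by exact_mod_cast h0
  have hjN : (j : ℝ) < N := by exact_mod_cast hj
  have hs : 0 < Real.sin (Real.pi * j / N) := by
    apply Real.sin_pos_of_pos_of_lt_pi
    · have := Real.pi_pos
      positivity
    · rw [div_lt_iff₀ hN]
      exact mul_lt_mul_of_pos_left hjN Real.pi_pos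
  have h := aux_T (Real.pi * j / N) ν N
  have e : Real.pi * j / N * (2 * (N + ν) - 1)
      = Real.pi * j / N * (2 * ν - 1) + j * (2 * Real.pi) := by
    field_simp; ring
  rw [e, Real.cos_add_nat_mul_two_pi, sub_self, zero_div] at h
  have h2 := (mul_eq_zero.1 h).resolve_left hs.ne'
  rw [← h2]
  refine Finset.sum_congr rfl fun k _ => ?_
  congr 1; ring

lemma aux_N (N : ℕ) (hN : 0 < N) (ν : ℝ) :
    ∑ k ∈ Finset.range N, Real.sin (2 * (N : ℝ) * (Real.pi * ((k : ℝ) + ν) / (N : ℝ)))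
      = N * Real.sin (2 * Real.pi * ν) := by
  have hN' : (N : ℝ) ≠ 0 := by positivity
  rw [Finset.sum_congr rfl (g := fun _ => Real.sin (2 * Real.pi * ν))]
  · simp
  · intro k _
    rw [← Real.sin_add_nat_mul_two_pi (2 * Real.pi * ν) k]
    congr 1
    field_simp; ring

/-- For every positive integer `N` and real `ν`,
`∑_{k=0}^{N-1} sin(π(k+ν)/N) cos(π(k+ν)/N) D_N(k+ν)² = sin(2πν)/(2N)`. -/
theorem sin_cos_dirichlet_sum (N : ℕ) (hN : 0 < N) (ν : ℝ) :
    ∑ k ∈ Finset.range N,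
      Real.sin (Real.pi * ((k : ℝ) + ν) / (N : ℝ)) *
        Real.cos (Real.pi * ((k : ℝ) + ν) / (N : ℝ)) * (dirichlet N ((k : ℝ) + ν))^2
      = Real.sin (2 * Real.pi * ν) / (2 * (N : ℝ)) := by
  have hN' : (N : ℝ) ≠ 0 := by positivity
  have key : ∀ k ∈ Finset.range N,
      Real.sin (Real.pi * ((k : ℝ) + ν) / (N : ℝ)) *
        Real.cos (Real.pi * ((k : ℝ) + ν) / (N : ℝ)) * (dirichlet N ((k : ℝ) + ν))^2
      = (1 / (N : ℝ)) ^ 2 * ∑ m ∈ Finset.range N,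
        (Real.sin (2 * ((m + 1 : ℕ) : ℝ) * (Real.pi * ((k : ℝ) + ν) / (N : ℝ)))
          + Real.sin (2 * (m : ℝ) * (Real.pi * ((k : ℝ) + ν) / (N : ℝ)))) / 2 := by
    intro k _
    have hd : dirichlet N ((k : ℝ) + ν) = (1 / (N : ℝ)) * ∑ m ∈ Finset.range N,
        Real.cos ((2 * (m : ℝ) + 1 - N) * (Real.pi * ((k : ℝ) + ν) / (N : ℝ))) := by
      unfold dirichlet
      congr 1
      refine Finset.sum_congr rfl fun m _ => ?_
      congr 1; ring
    rw [hd]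
    generalize Real.pi * ((k : ℝ) + ν) / (N : ℝ) = x
    have hA := aux_A N x N
    rw [← aux_B]
    have e : (2 * (N : ℝ) - N) * x = N * x := by ring
    rw [e, add_self_div_two] at hA
    rw [← hA]
    ring
  rw [Finset.sum_congr rfl key, ← Finset.mul_sum, Finset.sum_comm]
  simp_rw [← Finset.sum_div, Finset.sum_add_distrib]
  have h0 : ∑ m ∈ Finset.range N, ∑ k ∈ Finset.range N,
      Real.sin (2 * (m : ℝ) * (Real.pi * ((k : ℝ) + ν) / (N : ℝ))) = 0 :=
    Finset.sum_eq_zero fun m hm => aux_Z N ν m (Finset.mem_range.1 hm)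
  have h1 : ∑ m ∈ Finset.range N, ∑ k ∈ Finset.range N,
      Real.sin (2 * ((m + 1 : ℕ) : ℝ) * (Real.pi * ((k : ℝ) + ν) / (N : ℝ)))
      = N * Real.sin (2 * Real.pi * ν) := by
    have hs := Finset.sum_range_succ (fun m : ℕ => ∑ k ∈ Finset.range N,
      Real.sin (2 * (m : ℝ) * (Real.pi * ((k : ℝ) + ν) / (N : ℝ)))) N
    rw [Finset.sum_range_succ', h0, aux_N N hN] at hs
    simpa using hs
  rw [h0, h1]
  field_simp
  ring
end

section
/- For every positive integer N and every real ν with |ν| ≤ 1/2, one has ‖s_ν‖₂ ≤ (2π/√3)·|ν| and ‖c_ν − e₀‖₂ ≤ (2π/√3)·|ν|, where e₀ ∈ ℝ^N is the standard basis vector with a 1 in entry k = 0. -/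
open Complex in
lemma dirichlet_exp (N : ℕ) (x : ℝ) : (dirichlet N x : ℂ) =
    1 / N * ∑ m ∈ Finset.range N, exp (Real.pi * x * (2 * m + 1 - N) / N * I) := by
  have hr : ∑ m ∈ Finset.range N, exp (-(Real.pi * x * (2 * m + 1 - N) / N) * I)
      = ∑ m ∈ Finset.range N, exp (Real.pi * x * (2 * m + 1 - N) / N * I) := by
    rw [← Finset.sum_range_reflect]
    refine Finset.sum_congr rfl fun m hm => ?_
    have hm := Finset.mem_range.1 hm
    have : ((N - 1 - m : ℕ) : ℂ) = N - 1 - m := by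
      rw [Nat.sub_sub, Nat.cast_sub (by omega)]; push_cast; ring
    rw [this]
    congr 1
    ring
  unfold dirichlet
  push_cast
  congr 1
  simp only [Complex.cos]
  rw [← Finset.sum_div, Finset.sum_add_distrib, hr]
  ring

open Complex in
lemma vec_exp (N : ℕ) (hN : 0 < N) (ν : ℝ) (k : ℕ) :
    (cVec N ν k : ℂ) + sVec N ν k * I =
    1 / N * ∑ m ∈ Finset.range N, exp (2 * Real.pi * I / N) ^ (m * k) *
      exp (2 * Real.pi * m * ν / N * I) := by
  have hN' : (N : ℂ) ≠ 0 := by exact_mod_cast hN.ne'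
  have : (cVec N ν k : ℂ) + sVec N ν k * I =
      exp (Real.pi * (1 - 1 / N) * (k + ν) * I) * dirichlet N (k + ν) := by
    unfold cVec sVec
    push_cast
    rw [Complex.exp_mul_I]
    ring
  rw [this, dirichlet_exp, mul_left_comm, Finset.mul_sum]
  congr 1
  refine Finset.sum_congr rfl fun m _ => ?_
  rw [← Complex.exp_nat_mul, ← Complex.exp_add, ← Complex.exp_add]
  congr 1
  push_cast
  field_simp
  ring

open Complex in
lemma orth_sum (N : ℕ) (hN : 0 < N) (m n : ℕ) (hm : m < N) (hn : n < N) :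
    ∑ k ∈ Finset.range N, exp (2 * Real.pi * I / N) ^ (m * k) *
      (starRingEnd ℂ) (exp (2 * Real.pi * I / N) ^ (n * k)) = if m = n then (N : ℂ) else 0 := by
  have hp := Complex.isPrimitiveRoot_exp N hN.ne'
  set ζ := exp (2 * Real.pi * I / N) with hζ
  have hc : (starRingEnd ℂ) ζ = ζ⁻¹ := by
    rw [hζ, ← Complex.exp_conj, ← Complex.exp_neg]
    congr 1
    simp [map_ofNat]
    ring
  have h0 : ζ ≠ 0 := Complex.exp_ne_zero _
  have : ∀ k ∈ Finset.range N, ζ ^ (m * k) * (starRingEnd ℂ) (ζ ^ (n * k))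
      = (ζ ^ m * (ζ ^ n)⁻¹) ^ k := by
    intro k _
    rw [map_pow, hc, pow_mul, pow_mul, mul_pow, inv_pow]
  rw [Finset.sum_congr rfl this]
  split_ifs with h
  · subst h
    simp [h0]
  · have hne : ζ ^ m * (ζ ^ n)⁻¹ ≠ 1 := by
      intro h1
      apply h
      apply hp.pow_inj hm hn
      field_simp at h1
      exact h1
    rw [geom_sum_eq hne, mul_pow, inv_pow, ← pow_mul, ← pow_mul, mul_comm m, mul_comm n, pow_mul,
      pow_mul, hp.pow_eq_one]
    simp

open Complex in
lemma parseval_aux (N : ℕ) (hN : 0 < N) (a : ℕ → ℂ) :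
    ∑ k ∈ Finset.range N, ‖∑ m ∈ Finset.range N, exp (2 * Real.pi * I / N) ^ (m * k) * a m‖ ^ 2
      = N * ∑ m ∈ Finset.range N, ‖a m‖ ^ 2 := by
  apply Complex.ofReal_injective
  push_cast
  simp only [← Complex.mul_conj', map_sum, map_mul, Finset.sum_mul_sum]
  rw [Finset.sum_comm, Finset.mul_sum]
  refine Finset.sum_congr rfl fun m hm => ?_
  rw [Finset.sum_comm]
  have : ∀ n ∈ Finset.range N, ∑ k ∈ Finset.range N,
      exp (2 * Real.pi * I / N) ^ (m * k) * a m *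
      ((starRingEnd ℂ) (exp (2 * Real.pi * I / N) ^ (n * k)) * (starRingEnd ℂ) (a n))
      = if m = n then N * (a m * (starRingEnd ℂ) (a n)) else 0 := by
    intro n hn
    have := orth_sum N hN m n (Finset.mem_range.1 hm) (Finset.mem_range.1 hn)
    rw [← zero_mul (a m * (starRingEnd ℂ) (a n)), ← ite_mul, ← this, Finset.sum_mul]
    exact Finset.sum_congr rfl fun k _ => by ring
  rw [Finset.sum_congr rfl this, Finset.sum_ite_eq, if_pos hm]

open Complex in
lemma delta_exp (N : ℕ) (hN : 0 < N) (k : ℕ) (hk : k < N) :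
    (if k = 0 then (1 : ℂ) else 0) =
    1 / N * ∑ m ∈ Finset.range N, exp (2 * Real.pi * I / N) ^ (m * k) := by
  have hN' : (N : ℂ) ≠ 0 := by exact_mod_cast hN.ne'
  have := orth_sum N hN k 0 hk hN
  simp only [zero_mul, pow_zero, map_one, mul_one] at this
  simp only [mul_comm _ k]
  rw [this]
  split_ifs <;> simp [hN']

lemma sum_sq_le (N : ℕ) : ∑ m ∈ Finset.range N, (m : ℝ) ^ 2 ≤ (N : ℝ) ^ 3 / 3 := by
  induction N with
  | zero => simp
  | succ n ih =>
    rw [Finset.sum_range_succ]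
    push_cast
    have : (0 : ℝ) ≤ n := n.cast_nonneg
    nlinarith

open Complex in
lemma total_bound (N : ℕ) (hN : 0 < N) (ν : ℝ) :
    ∑ k ∈ Finset.range N, ((cVec N ν k - if k = 0 then 1 else 0) ^ 2 + (sVec N ν k) ^ 2)
      ≤ (2 * Real.pi / Real.sqrt 3 * |ν|) ^ 2 := by
  have hN' : (0 : ℝ) < N := by exact_mod_cast hN
  set a : ℕ → ℂ := fun m => exp (I * (2 * Real.pi * m * ν / N : ℝ)) - 1 with ha
  have key : ∀ k ∈ Finset.range N,
      (cVec N ν k - if k = 0 then 1 else 0) ^ 2 + (sVec N ν k) ^ 2 =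
      1 / (N : ℝ) ^ 2 *
        ‖∑ m ∈ Finset.range N, exp (2 * Real.pi * I / N) ^ (m * k) * a m‖ ^ 2 := by
    intro k hk
    have h1 : ((cVec N ν k - if k = 0 then 1 else 0 : ℝ) : ℂ) + (sVec N ν k : ℝ) * I
        = 1 / N * ∑ m ∈ Finset.range N, exp (2 * Real.pi * I / N) ^ (m * k) * a m := by
      have h2 := vec_exp N hN ν k
      have h3 := delta_exp N hN k (Finset.mem_range.1 hk)
      have h4 : ((cVec N ν k - if k = 0 then 1 else 0 : ℝ) : ℂ) + (sVec N ν k : ℝ) * I =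
        ((cVec N ν k : ℂ) + sVec N ν k * I) - (if k = 0 then (1 : ℂ) else 0) := by
        split_ifs <;> push_cast <;> ring
      rw [h4, h2, h3, ← mul_sub, ← Finset.sum_sub_distrib]
      congr 1
      refine Finset.sum_congr rfl fun m _ => ?_
      rw [ha]
      push_cast
      rw [mul_comm I]
      ring
    have h5 := congrArg (fun z : ℂ => ‖z‖ ^ 2) h1
    simp only [norm_mul, mul_pow] at h5
    rw [← Complex.normSq_eq_norm_sq, Complex.normSq_add_mul_I] at h5
    rw [h5]
    simp
  rw [Finset.sum_congr rfl key, ← Finset.mul_sum, parseval_aux N hN]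
  have hb : ∑ m ∈ Finset.range N, ‖a m‖ ^ 2 ≤
      (2 * Real.pi * ν / N) ^ 2 * ((N : ℝ) ^ 3 / 3) := by
    refine le_trans ?_ (mul_le_mul_of_nonneg_left (sum_sq_le N) (sq_nonneg _))
    rw [Finset.mul_sum]
    refine Finset.sum_le_sum fun m _ => ?_
    have h := Real.norm_exp_I_mul_ofReal_sub_one_le (x := 2 * Real.pi * m * ν / N)
    calc ‖a m‖ ^ 2 ≤ ‖2 * Real.pi * m * ν / N‖ ^ 2 := by gcongr
      _ = _ := by rw [Real.norm_eq_abs, sq_abs]; ring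
  calc _ ≤ 1 / (N : ℝ) ^ 2 * (N * ((2 * Real.pi * ν / N) ^ 2 * ((N : ℝ) ^ 3 / 3))) := by gcongr
    _ = _ := by
      rw [mul_pow, sq_abs, div_pow (2 * Real.pi), Real.sq_sqrt (by norm_num)]
      field_simp

/-- For every positive integer `N` and `|ν| ≤ 1/2`, `‖s_ν‖₂ ≤ (2π/√3)|ν|` and
`‖c_ν − e₀‖₂ ≤ (2π/√3)|ν|`, where `e₀` is the standard basis vector at entry `0`. -/
theorem sVec_cVec_l2_bounds (N : ℕ) (hN : 0 < N) (ν : ℝ) (hν : |ν| ≤ 1 / 2) :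
    Real.sqrt (∑ k ∈ Finset.range N, (sVec N ν k)^2)
        ≤ 2 * Real.pi / Real.sqrt 3 * |ν| ∧
    Real.sqrt (∑ k ∈ Finset.range N, (cVec N ν k - if k = 0 then 1 else 0)^2)
        ≤ 2 * Real.pi / Real.sqrt 3 * |ν| := by
  have h := total_bound N hN ν
  have h0 : 0 ≤ 2 * Real.pi / Real.sqrt 3 * |ν| := by positivity
  constructor
  · refine Real.sqrt_le_iff.2 ⟨h0, le_trans (Finset.sum_le_sum fun k _ => ?_) h⟩
    exact le_add_of_nonneg_left (sq_nonneg _)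
  · refine Real.sqrt_le_iff.2 ⟨h0, le_trans (Finset.sum_le_sum fun k _ => ?_) h⟩
    exact le_add_of_nonneg_right (sq_nonneg _)
end

section
/- For every integer N ≥ 100 and every real ν with |ν| ≤ 2/5, one has ‖s_ν‖₂ ≥ 2|ν|. -/
open Finset in
lemma cos_sum_zero (N : ℕ) (hN : 0 < N) (ν : ℝ) (j : ℤ) (hj : ¬ (N : ℤ) ∣ j) :
    ∑ k ∈ range N, Real.cos (2 * Real.pi * j * ((k : ℝ) + ν) / N) = 0 := by
  have hN' : (N : ℝ) ≠ 0 := by positivity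
  have hs : Real.sin (Real.pi * j / N) ≠ 0 := by
    intro h
    obtain ⟨n, hn⟩ := Real.sin_eq_zero_iff.1 h
    apply hj
    refine ⟨n, ?_⟩
    have hp := Real.pi_ne_zero
    have : (j : ℝ) = N * n := by
      field_simp at hn
      linarith
    exact_mod_cast this
  have h2 : 2 * Real.sin (Real.pi * j / N) *
      ∑ k ∈ range N, Real.cos (2 * Real.pi * j * ((k : ℝ) + ν) / N) = 0 := by
    rw [mul_sum]
    have : ∀ k ∈ range N, 2 * Real.sin (Real.pi * j / N) *
        Real.cos (2 * Real.pi * j * ((k : ℝ) + ν) / N) =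
        (fun k : ℕ => Real.sin (2 * Real.pi * j * ((k : ℝ) + ν - 1 / 2) / N)) (k + 1) -
        (fun k : ℕ => Real.sin (2 * Real.pi * j * ((k : ℝ) + ν - 1 / 2) / N)) k := by
      intro k _
      have e1 : 2 * Real.pi * j * (((k + 1 : ℕ) : ℝ) + ν - 1 / 2) / N
          = 2 * Real.pi * j * ((k : ℝ) + ν) / N + Real.pi * j / N := by
        push_cast; field_simp; ring
      have e2 : 2 * Real.pi * j * ((k : ℝ) + ν - 1 / 2) / N
          = 2 * Real.pi * j * ((k : ℝ) + ν) / N - Real.pi * j / N := by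
        field_simp
      simp only
      rw [e1, e2, Real.sin_add, Real.sin_sub]
      ring
    rw [sum_congr rfl this, sum_range_sub
      (fun k : ℕ => Real.sin (2 * Real.pi * j * ((k : ℝ) + ν - 1 / 2) / N))]
    have e : 2 * Real.pi * j * ((N : ℝ) + ν - 1 / 2) / N
        = 2 * Real.pi * j * (((0 : ℕ) : ℝ) + ν - 1 / 2) / N + j * (2 * Real.pi) := by
      push_cast; field_simp; ring
    rw [e, Real.sin_add_int_mul_two_pi, sub_self]
  rcases mul_eq_zero.1 h2 with h | h
  · exact absurd h (by simpa using hs)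
  · exact h

open Finset in
lemma sVec_eq (N : ℕ) (hN : 0 < N) (ν : ℝ) (k : ℕ) :
    sVec N ν k = (1 / (N : ℝ)) * ∑ m ∈ range N, Real.sin (2 * Real.pi * m * ((k : ℝ) + ν) / N) := by
  have hN' : (N : ℝ) ≠ 0 := by positivity
  unfold sVec dirichlet
  set x := (k : ℝ) + ν
  have hz : ∑ m ∈ range N, Real.sin (Real.pi * x * (2 * (m : ℝ) + 1 - (N : ℝ)) / (N : ℝ)) = 0 := by
    have h := sum_range_reflect
      (fun m : ℕ => Real.sin (Real.pi * x * (2 * (m : ℝ) + 1 - (N : ℝ)) / (N : ℝ))) N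
    have h3 : ∑ m ∈ range N, Real.sin (Real.pi * x * (2 * ((N - 1 - m : ℕ) : ℝ) + 1 - (N : ℝ)) / (N : ℝ))
       = - ∑ m ∈ range N, Real.sin (Real.pi * x * (2 * (m : ℝ) + 1 - (N : ℝ)) / (N : ℝ)) := by
      rw [← sum_neg_distrib]
      apply sum_congr rfl
      intro m hm
      have hm' := mem_range.1 hm
      have : ((N - 1 - m : ℕ) : ℝ) = N - 1 - m := by
        rw [Nat.sub_sub, Nat.cast_sub (by omega)]; push_cast; ring
      rw [this, ← Real.sin_neg]
      congr 1
      ring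
    linarith
  have : ∀ m ∈ range N, Real.sin (2 * Real.pi * m * x / N) =
      Real.sin (Real.pi * (1 - 1 / (N : ℝ)) * x) *
        Real.cos (Real.pi * x * (2 * (m : ℝ) + 1 - (N : ℝ)) / (N : ℝ)) +
      Real.cos (Real.pi * (1 - 1 / (N : ℝ)) * x) *
        Real.sin (Real.pi * x * (2 * (m : ℝ) + 1 - (N : ℝ)) / (N : ℝ)) := by
    intro m _
    rw [← Real.sin_add]
    congr 1
    field_simp
    ring
  rw [sum_congr rfl this, sum_add_distrib, ← mul_sum, ← mul_sum, hz]
  ring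

open Finset in
lemma sum_sq_eq (N : ℕ) (hN : 0 < N) (ν : ℝ) :
    ∑ k ∈ range N, (sVec N ν k)^2 = (1 - 1 / (N : ℝ)) * Real.sin (Real.pi * ν) ^ 2 := by
  have hN' : (N : ℝ) ≠ 0 := by positivity
  have h1 : ∀ k ∈ range N, (sVec N ν k)^2 = ∑ m ∈ range N, ∑ l ∈ range N,
      (1 / (2 * (N : ℝ) ^ 2)) *
       (Real.cos (2 * Real.pi * ((m : ℤ) - (l : ℤ) : ℤ) * ((k : ℝ) + ν) / N) -
        Real.cos (2 * Real.pi * ((m : ℤ) + (l : ℤ) : ℤ) * ((k : ℝ) + ν) / N)) := by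
    intro k _
    rw [sVec_eq N hN, mul_pow, sq (∑ m ∈ range N, _), sum_mul_sum, mul_sum]
    apply sum_congr rfl
    intro m _
    rw [mul_sum]
    apply sum_congr rfl
    intro l _
    have e1 : 2 * Real.pi * ((m : ℤ) - (l : ℤ) : ℤ) * ((k : ℝ) + ν) / N =
      2 * Real.pi * m * ((k : ℝ) + ν) / N - 2 * Real.pi * l * ((k : ℝ) + ν) / N := by
      push_cast; ring
    have e2 : 2 * Real.pi * ((m : ℤ) + (l : ℤ) : ℤ) * ((k : ℝ) + ν) / N =
      2 * Real.pi * m * ((k : ℝ) + ν) / N + 2 * Real.pi * l * ((k : ℝ) + ν) / N := by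
      push_cast; ring
    rw [e1, e2, Real.cos_sub, Real.cos_add]
    field_simp
    ring
  rw [sum_congr rfl h1, sum_comm]
  have h2 : ∀ m ∈ range N, ∑ k ∈ range N, ∑ l ∈ range N,
      (1 / (2 * (N : ℝ) ^ 2)) *
       (Real.cos (2 * Real.pi * ((m : ℤ) - (l : ℤ) : ℤ) * ((k : ℝ) + ν) / N) -
        Real.cos (2 * Real.pi * ((m : ℤ) + (l : ℤ) : ℤ) * ((k : ℝ) + ν) / N)) =
      (1 / (2 * (N : ℝ))) * (1 - if m = 0 then 1 else Real.cos (2 * Real.pi * ν)) := by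
    intro m hm
    have hm' := mem_range.1 hm
    rw [sum_comm]
    simp_rw [← mul_sum, sum_sub_distrib]
    have hd : ∑ l ∈ range N, ∑ k ∈ range N,
        Real.cos (2 * Real.pi * ((m : ℤ) - (l : ℤ) : ℤ) * ((k : ℝ) + ν) / N) = N := by
      rw [sum_eq_single_of_mem m hm]
      · simp
      · intro l hl hlm
        apply cos_sum_zero N hN
        have hl' := mem_range.1 hl
        intro hdvd
        have := Int.eq_zero_of_abs_lt_dvd hdvd (by rw [abs_lt]; constructor <;> omega)
        omega
    have hp : ∑ l ∈ range N, ∑ k ∈ range N,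
        Real.cos (2 * Real.pi * ((m : ℤ) + (l : ℤ) : ℤ) * ((k : ℝ) + ν) / N) =
        N * if m = 0 then 1 else Real.cos (2 * Real.pi * ν) := by
      split_ifs with h0
      · subst h0
        rw [sum_eq_single_of_mem 0 hm]
        · simp
        · intro l hl hlm
          apply cos_sum_zero N hN
          have hl' := mem_range.1 hl
          intro hdvd
          have := Int.eq_zero_of_abs_lt_dvd hdvd (by rw [abs_lt]; constructor <;> omega)
          omega
      · rw [sum_eq_single_of_mem (N - m) (mem_range.2 (by omega))]
        · have : ∀ k ∈ range N, Real.cos (2 * Real.pi *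
            ((m : ℤ) + ((N - m : ℕ) : ℤ) : ℤ) * ((k : ℝ) + ν) / N) = Real.cos (2 * Real.pi * ν) := by
            intro k _
            have e : ((m : ℤ) + ((N - m : ℕ) : ℤ) : ℤ) = (N : ℤ) := by omega
            rw [e, ← Real.cos_add_nat_mul_two_pi (2 * Real.pi * ν) k]
            congr 1
            push_cast
            field_simp
            ring
          rw [sum_congr rfl this]
          simp
        · intro l hl hlm
          apply cos_sum_zero N hN
          have hl' := mem_range.1 hl
          intro hdvd
          have hd2 : (N : ℤ) ∣ (m : ℤ) + l - N := dvd_sub_self_right.2 hdvd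
          have := Int.eq_zero_of_abs_lt_dvd hd2 (by rw [abs_lt]; constructor <;> omega)
          omega
    rw [hd, hp]
    field_simp
  rw [sum_congr rfl h2, ← mul_sum]
  obtain ⟨M, rfl⟩ : ∃ M, N = M + 1 := ⟨N - 1, by omega⟩
  rw [sum_range_succ']
  simp only [Nat.add_eq_zero_iff, one_ne_zero, and_false, if_false, if_true, sum_const, card_range,
    nsmul_eq_mul, sub_self]
  have hc : Real.cos (2 * Real.pi * ν) = 1 - 2 * Real.sin (Real.pi * ν) ^ 2 := by
    rw [mul_assoc, Real.cos_two_mul, Real.cos_sq']; ring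
  rw [hc]
  push_cast at hN' ⊢
  field_simp
  ring

lemma sin_lower (x : ℝ) (h0 : 0 ≤ x) (h1 : x ≤ 2 / 5) : 2.02 * x ≤ Real.sin (Real.pi * x) := by
  have hp1 := Real.pi_gt_d2
  have hp2 := Real.pi_lt_d2
  rcases h0.eq_or_lt with rfl | h0
  · simp
  set y := Real.pi * x / 2 with hy
  have hyx : 1.57 * x ≤ y := by rw [hy]; nlinarith
  have hy0 : 0 < y := by rw [hy]; positivity
  have hy1 : y ≤ 0.63 := by rw [hy]; nlinarith
  have hs := Real.sin_gt_sub_cube hy0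
  have hc := Real.one_sub_sq_div_two_le_cos (x := y)
  have hsq : y ^ 2 ≤ 0.4 := by nlinarith
  have hs' : 0.9 * y ≤ Real.sin y := by nlinarith
  have hc' : 0.8 ≤ Real.cos y := by linarith
  have : Real.pi * x = 2 * y := by rw [hy]; ring
  rw [this, Real.sin_two_mul]
  nlinarith [mul_le_mul hs' hc' (by norm_num) (by linarith)]

/-- For every integer `N ≥ 100` and real `ν` with `|ν| ≤ 2/5`, `‖s_ν‖₂ ≥ 2|ν|`. -/
theorem sVec_l2_lower_bound (N : ℕ) (hN : 100 ≤ N) (ν : ℝ) (hν : |ν| ≤ 2 / 5) :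
    2 * |ν| ≤ Real.sqrt (∑ k ∈ Finset.range N, (sVec N ν k)^2) := by
  rw [sum_sq_eq N (by omega)]
  apply Real.le_sqrt_of_sq_le
  have hN1 : (100 : ℝ) ≤ N := by exact_mod_cast hN
  have hN2 : 1 / (N : ℝ) ≤ 1 / 100 := one_div_le_one_div_of_le (by norm_num) hN1
  have h := sin_lower |ν| (abs_nonneg _) hν
  have hs : Real.sin (Real.pi * ν) ^ 2 = Real.sin (Real.pi * |ν|) ^ 2 := by
    rcases abs_choice ν with h | h <;> rw [h]
    rw [mul_neg, Real.sin_neg, neg_sq]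
  rw [hs]
  have h0 := abs_nonneg ν
  have h3 : (2.02 * |ν|) ^ 2 ≤ Real.sin (Real.pi * |ν|) ^ 2 := pow_le_pow_left₀ (by positivity) h 2
  nlinarith [sq_nonneg (Real.sin (Real.pi * |ν|)), sq_nonneg |ν|]
end

section
/- For every positive integer N, every real ν, and all distinct integers n, m ∈ {0,…,N−1}, one has Σ_{k=0}^{N−1} sin(π_N(k − n + ν))·D_N(k − n + ν)·sin(π_N(k − m + ν))·D_N(k − m + ν) = −sin²(πν)/N. -/
lemma cosSum_aux (N : ℕ) (hN : 0 < N) (p : ℤ) (θ : ℝ) :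
    ∑ k ∈ Finset.range N, Real.cos (2 * Real.pi * p * k / N + θ) =
      if (N : ℤ) ∣ p then N * Real.cos θ else 0 := by
  have hN' : (N : ℝ) ≠ 0 := by positivity
  split_ifs with h
  · obtain ⟨q, rfl⟩ := h
    rw [Finset.sum_congr rfl (g := fun _ => Real.cos θ)]
    · simp
    · intro k _
      have : 2 * Real.pi * ((N * q : ℤ) : ℝ) * k / N + θ = θ + ((q * k : ℤ) : ℝ) * (2 * Real.pi) := by
        push_cast; field_simp; ring
      rw [this, Real.cos_add_int_mul_two_pi]
  · set h0 : ℝ := Real.pi * p / N with hh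
    have hs : Real.sin h0 ≠ 0 := by
      intro h1
      rw [Real.sin_eq_zero_iff] at h1
      obtain ⟨q, hq⟩ := h1
      apply h
      refine ⟨q, ?_⟩
      rw [hh, eq_div_iff hN'] at hq
      have : Real.pi * ((q : ℝ) * N - p) = 0 := by linarith
      have h2 := (mul_eq_zero.mp this).resolve_left Real.pi_ne_zero
      have h3 : (p : ℝ) = ((N * q : ℤ) : ℝ) := by push_cast; linarith
      exact_mod_cast h3
    have key : 2 * Real.sin h0 * ∑ k ∈ Finset.range N, Real.cos (2 * Real.pi * p * k / N + θ) = 0 := by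
      rw [Finset.mul_sum, Finset.sum_congr rfl (g := fun k : ℕ =>
        (fun k : ℕ => Real.sin (2 * h0 * k - h0 + θ)) (k + 1)
          - (fun k : ℕ => Real.sin (2 * h0 * k - h0 + θ)) k)]
      · rw [Finset.sum_range_sub (fun k : ℕ => Real.sin (2 * h0 * k - h0 + θ))]
        have : 2 * h0 * (N : ℕ) - h0 + θ = (-h0 + θ) + (p : ℝ) * (2 * Real.pi) := by
          rw [hh]; field_simp; ring
        rw [this, Real.sin_add_int_mul_two_pi]
        simp
      · intro k _
        have e1 : 2 * h0 * ((k + 1 : ℕ) : ℝ) - h0 + θ = (2 * Real.pi * p * k / N + θ) + h0 := by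
          rw [hh]; push_cast; field_simp; ring
        have e2 : 2 * h0 * (k : ℝ) - h0 + θ = (2 * Real.pi * p * k / N + θ) - h0 := by
          rw [hh]; field_simp; ring
        simp only []
        rw [e1, e2, Real.sin_add, Real.sin_sub]; ring
    exact (mul_eq_zero.mp key).resolve_left (mul_ne_zero two_ne_zero hs)

lemma sinD_aux (N : ℕ) (hN : 0 < N) (x : ℝ) :
    Real.sin (Real.pi * (1 - 1 / (N : ℝ)) * x) * dirichlet N x =
      (1 / (N : ℝ)) * ∑ j ∈ Finset.range N, Real.sin (2 * Real.pi * j * x / N) := by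
  have hN' : (N : ℝ) ≠ 0 := by positivity
  unfold dirichlet
  rw [mul_left_comm]
  congr 1
  have h1 := Finset.sum_range_reflect (fun j : ℕ => Real.sin (2 * Real.pi * j * x / N)) N
  have h2 : ∑ j ∈ Finset.range N, Real.sin (2 * Real.pi * j * x / N) =
    ∑ j ∈ Finset.range N, (Real.sin (2 * Real.pi * j * x / N)
      + Real.sin (2 * Real.pi * ((N - 1 - j : ℕ) : ℝ) * x / N)) / 2 := by
    rw [← Finset.sum_div, Finset.sum_add_distrib, h1]; ring
  rw [h2, Finset.mul_sum]
  refine Finset.sum_congr rfl fun j hj => ?_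
  have hj' : j + 1 ≤ N := Finset.mem_range.mp hj
  have hc : ((N - 1 - j : ℕ) : ℝ) = N - 1 - j := by
    rw [Nat.sub_sub, Nat.cast_sub (by omega)]; push_cast; ring
  rw [hc]
  have e1 : 2 * Real.pi * j * x / N = Real.pi * (1 - 1 / (N : ℝ)) * x
      + Real.pi * x * (2 * j + 1 - N) / N := by field_simp; ring
  have e2 : 2 * Real.pi * ((N : ℝ) - 1 - j) * x / N = Real.pi * (1 - 1 / (N : ℝ)) * x
      - Real.pi * x * (2 * j + 1 - N) / N := by field_simp; ring
  rw [e1, e2, Real.sin_add, Real.sin_sub]; ring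

lemma inner_aux (N : ℕ) (hN : 0 < N) (a b : ℝ) (j l : ℕ) :
    ∑ k ∈ Finset.range N, Real.sin (2 * Real.pi * j * (k + a) / N) *
      Real.sin (2 * Real.pi * l * (k + b) / N) =
    ((if (N : ℤ) ∣ (j : ℤ) - l then N * Real.cos (2 * Real.pi * (j * a - l * b) / N) else 0)
     - (if (N : ℤ) ∣ (j : ℤ) + l then N * Real.cos (2 * Real.pi * (j * a + l * b) / N) else 0)) / 2 := by
  rw [← cosSum_aux N hN, ← cosSum_aux N hN, ← Finset.sum_sub_distrib, Finset.sum_div]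
  refine Finset.sum_congr rfl fun k _ => ?_
  have e1 : 2 * Real.pi * (((j : ℤ) - l : ℤ) : ℝ) * k / N + 2 * Real.pi * (j * a - l * b) / N =
    2 * Real.pi * j * (k + a) / N - 2 * Real.pi * l * (k + b) / N := by push_cast; ring
  have e2 : 2 * Real.pi * (((j : ℤ) + l : ℤ) : ℝ) * k / N + 2 * Real.pi * (j * a + l * b) / N =
    2 * Real.pi * j * (k + a) / N + 2 * Real.pi * l * (k + b) / N := by push_cast; ring
  rw [e1, e2, Real.cos_add, Real.cos_sub]; ring

lemma dvd_sub_aux (N j l : ℕ) (hj : j < N) (hl : l < N) : (N : ℤ) ∣ (j : ℤ) - l ↔ l = j := by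
  constructor
  · intro h
    have := Int.eq_zero_of_abs_lt_dvd h (by rw [abs_lt]; omega)
    omega
  · rintro rfl; simp

lemma dvd_add_aux (N j l : ℕ) (hj0 : 0 < j) (hj : j < N) (hl : l < N) :
    (N : ℤ) ∣ (j : ℤ) + l ↔ l = N - j := by
  constructor
  · intro h
    have h' : (N : ℤ) ∣ (j : ℤ) + l - N := h.sub (dvd_refl _)
    have := Int.eq_zero_of_abs_lt_dvd h' (by rw [abs_lt]; omega)
    omega
  · rintro rfl
    refine ⟨1, ?_⟩
    omega

lemma outer_aux (N : ℕ) (hN : 0 < N) (ν : ℝ) (n m j : ℕ) (hj : j < N) :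
    ∑ l ∈ Finset.range N, ∑ k ∈ Finset.range N,
      Real.sin (2 * Real.pi * j * (k + (ν - n)) / N) *
      Real.sin (2 * Real.pi * l * (k + (ν - m)) / N) =
    (N * Real.cos (2 * Real.pi * (((m : ℤ) - n : ℤ) : ℝ) * j / N + 0)
      - N * Real.cos (2 * Real.pi * (((m : ℤ) - n : ℤ) : ℝ) * j / N + 2 * Real.pi * ν)) / 2
      - (if j = 0 then N * (1 - Real.cos (2 * Real.pi * ν)) / 2 else 0) := by
  have hN' : (N : ℝ) ≠ 0 := by positivity
  by_cases h0 : j = 0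
  · subst h0
    simp
    ring
  rw [if_neg h0, sub_zero, Finset.sum_congr rfl (fun l _ => inner_aux N hN (ν - n) (ν - m) j l),
    ← Finset.sum_div, Finset.sum_sub_distrib]
  congr 2
  · rw [Finset.sum_congr rfl (fun l hl => by
      rw [if_congr (dvd_sub_aux N j l hj (Finset.mem_range.mp hl)) rfl rfl]),
      Finset.sum_ite_eq' , if_pos (Finset.mem_range.mpr hj)]
    congr 2
    push_cast; ring
  · rw [Finset.sum_congr rfl (fun l hl => by
      rw [if_congr (dvd_add_aux N j l (by omega) hj (Finset.mem_range.mp hl)) rfl rfl]),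
      Finset.sum_ite_eq' , if_pos (Finset.mem_range.mpr (by omega))]
    congr 1
    rw [← Real.cos_sub_nat_mul_two_pi _ m]
    rw [← Real.cos_sub_nat_mul_two_pi (2 * Real.pi * (((m : ℤ) - n : ℤ) : ℝ) * j / N + 2 * Real.pi * ν) (2 * m)]
    congr 1
    rw [Nat.cast_sub hj.le]
    push_cast; field_simp; ring


/-- For every positive integer `N`, real `ν`, and distinct `n, m ∈ {0,…,N−1}`,
`∑_{k=0}^{N-1} sin(π_N(k-n+ν)) D_N(k-n+ν) sin(π_N(k-m+ν)) D_N(k-m+ν) = −sin²(πν)/N`,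
where `π_N = π(1-1/N)`. -/
theorem dirichlet_cross_term (N : ℕ) (hN : 0 < N) (ν : ℝ) (n m : ℕ)
    (hn : n < N) (hm : m < N) (hnm : n ≠ m) :
    ∑ k ∈ Finset.range N,
      (Real.sin (Real.pi * (1 - 1 / (N : ℝ)) * ((k : ℝ) - (n : ℝ) + ν)) *
          dirichlet N ((k : ℝ) - (n : ℝ) + ν)) *
      (Real.sin (Real.pi * (1 - 1 / (N : ℝ)) * ((k : ℝ) - (m : ℝ) + ν)) *
          dirichlet N ((k : ℝ) - (m : ℝ) + ν))
      = -(Real.sin (Real.pi * ν))^2 / (N : ℝ) := by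
  have hN' : (N : ℝ) ≠ 0 := by positivity
  have step : ∀ k ∈ Finset.range N,
      (Real.sin (Real.pi * (1 - 1 / (N : ℝ)) * ((k : ℝ) - (n : ℝ) + ν)) *
          dirichlet N ((k : ℝ) - (n : ℝ) + ν)) *
      (Real.sin (Real.pi * (1 - 1 / (N : ℝ)) * ((k : ℝ) - (m : ℝ) + ν)) *
          dirichlet N ((k : ℝ) - (m : ℝ) + ν)) =
      (1 / (N : ℝ)) ^ 2 * ∑ j ∈ Finset.range N, ∑ l ∈ Finset.range N,
        Real.sin (2 * Real.pi * j * (k + (ν - n)) / N) *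
        Real.sin (2 * Real.pi * l * (k + (ν - m)) / N) := by
    intro k _
    rw [sinD_aux N hN, sinD_aux N hN, ← Finset.sum_mul_sum]
    have e1 : (k : ℝ) - n + ν = k + (ν - n) := by ring
    have e2 : (k : ℝ) - m + ν = k + (ν - m) := by ring
    rw [e1, e2]
    ring
  rw [Finset.sum_congr rfl step, ← Finset.mul_sum, Finset.sum_comm]
  rw [Finset.sum_congr rfl (fun j hj => by
    rw [Finset.sum_comm, outer_aux N hN ν n m j (Finset.mem_range.mp hj)])]
  rw [Finset.sum_sub_distrib, ← Finset.sum_div, Finset.sum_sub_distrib, ← Finset.mul_sum,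
    ← Finset.mul_sum, cosSum_aux N hN, cosSum_aux N hN, Finset.sum_ite_eq',
    if_pos (Finset.mem_range.mpr hN)]
  have hd : ¬ (N : ℤ) ∣ (m : ℤ) - n := fun h => hnm ((dvd_sub_aux N m n hm hn).mp h)
  rw [if_neg hd, if_neg hd, mul_assoc 2 Real.pi ν, Real.cos_two_mul, Real.cos_sq']
  field_simp
  ring
end

section
/- Let N be a positive integer, x ∈ ℝ^N, and ν ∈ ℝ with |ν| ≤ 1/2. Write F_ν^{−1}(F x) = x^R + i·x^I with x^R, x^I ∈ ℝ^N. Then ‖x^I‖₂ ≤ (2π/√3)·|ν|·‖x‖₁ and ‖x^R − x‖₂ ≤ (2π/√3)·|ν|·‖x‖₁. -/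
open Matrix

/-- The shifted Fourier matrix `(F_ν)_{t,k} = exp(−2πi t (k+ν)/N)`; `F = Fmat N 0` is the
discrete Fourier matrix. -/
noncomputable def Fmat (N : ℕ) (ν : ℝ) : Matrix (Fin N) (Fin N) ℂ :=
  Matrix.of fun t k =>
    Complex.exp (((-(2 * Real.pi * ((t : ℕ) : ℝ) * (((k : ℕ) : ℝ) + ν) / (N : ℝ))) : ℝ)
      * Complex.I)

/-- `F_ν^{-1} (F x)` where `F_ν^{-1} = (1/N) F_ν^*`. -/
noncomputable def gridTransform (N : ℕ) (ν : ℝ) (x : Fin N → ℝ) : Fin N → ℂ :=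
  (((N : ℂ))⁻¹ • (Fmat N ν)ᴴ) *ᵥ ((Fmat N 0) *ᵥ fun k => ((x k : ℝ) : ℂ))

theorem aux_orth_s11 (N : ℕ) (hN : 0 < N) :
    (Fmat N 0)ᴴ * Fmat N 0 = (N : ℂ) • (1 : Matrix (Fin N) (Fin N) ℂ) := by
  have hNc : (N : ℂ) ≠ 0 := by exact_mod_cast hN.ne'
  ext j k
  rw [Matrix.mul_apply, Matrix.smul_apply, Matrix.one_apply]
  set z : ℂ := Complex.exp (2 * Real.pi * Complex.I * (((j : ℕ) : ℂ) - ((k : ℕ) : ℂ)) / N) with hz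
  have h1 : ∀ t : Fin N, (Fmat N 0)ᴴ j t * Fmat N 0 t k = z ^ (t : ℕ) := by
    intro t
    simp only [Fmat, Matrix.conjTranspose_apply, Matrix.of_apply, hz, Complex.star_def]
    rw [← Complex.exp_conj, ← Complex.exp_add, ← Complex.exp_nat_mul]
    congr 1
    simp only [map_mul, Complex.conj_ofReal, Complex.conj_I]
    push_cast
    field_simp
    ring
  simp_rw [h1]
  rw [Fin.sum_univ_eq_sum_range (fun t => z ^ t)]
  by_cases hjk : j = k
  · subst hjk
    simp [hz]
  · simp only [hjk, if_false, smul_zero]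
    have hzN : z ^ N = 1 := by
      rw [hz, ← Complex.exp_nat_mul, Complex.exp_eq_one_iff]
      refine ⟨(j : ℕ) - (k : ℕ), ?_⟩
      push_cast
      field_simp
    have hz1 : z ≠ 1 := by
      intro h
      rw [hz, Complex.exp_eq_one_iff] at h
      obtain ⟨n, hn⟩ := h
      have hpi : (Real.pi : ℂ) ≠ 0 := by exact_mod_cast Real.pi_ne_zero
      have h2 : (((j : ℕ) : ℂ) - ((k : ℕ) : ℂ)) = n * N := by
        have hI := Complex.I_ne_zero
        field_simp at hn
        linear_combination hn
      have h3 : (((j : ℕ) : ℤ) - ((k : ℕ) : ℤ)) = n * N := by exact_mod_cast h2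
      have hj := j.isLt
      have hk := k.isLt
      have h4 : (((j : ℕ) : ℤ) - ((k : ℕ) : ℤ)) = 0 := by
        apply Int.eq_zero_of_abs_lt_dvd (m := (N : ℤ)) ⟨n, by rw [h3]; ring⟩
        rw [abs_lt]; constructor <;> omega
      exact hjk (Fin.ext (by omega))
    rw [geom_sum_eq hz1, hzN]; simp

theorem aux_orth2 (N : ℕ) (hN : 0 < N) :
    Fmat N 0 * (Fmat N 0)ᴴ = (N : ℂ) • (1 : Matrix (Fin N) (Fin N) ℂ) := by
  have hNc : (N : ℂ) ≠ 0 := by exact_mod_cast hN.ne'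
  have h : ((N : ℂ)⁻¹ • (Fmat N 0)ᴴ) * Fmat N 0 = 1 := by
    rw [Matrix.smul_mul, aux_orth_s11 N hN, smul_smul, inv_mul_cancel₀ hNc, one_smul]
  rw [mul_eq_one_comm, Matrix.mul_smul] at h
  rw [← h, smul_smul, mul_inv_cancel₀ hNc, one_smul]

theorem aux_parseval (N : ℕ) (hN : 0 < N) (w : Fin N → ℂ) :
    ∑ n, ‖((Fmat N 0)ᴴ *ᵥ w) n‖ ^ 2 = N * ∑ t, ‖w t‖ ^ 2 := by
  have key : ∀ v : Fin N → ℂ, star v ⬝ᵥ v = ((∑ n, ‖v n‖ ^ 2 : ℝ) : ℂ) := by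
    intro v
    simp only [dotProduct, Pi.star_apply, Complex.star_def, Complex.conj_mul']
    push_cast; rfl
  have h : star ((Fmat N 0)ᴴ *ᵥ w) ⬝ᵥ ((Fmat N 0)ᴴ *ᵥ w) = N * (star w ⬝ᵥ w) := by
    rw [Matrix.star_mulVec, Matrix.conjTranspose_conjTranspose, Matrix.dotProduct_mulVec,
      Matrix.vecMul_vecMul, aux_orth2 N hN, ← Matrix.dotProduct_mulVec, Matrix.smul_mulVec,
      Matrix.one_mulVec, dotProduct_smul, smul_eq_mul]
  rw [key, key] at h
  exact_mod_cast h

theorem aux_sum (N : ℕ) : 3 * ∑ t ∈ Finset.range N, (t : ℝ) ^ 2 ≤ (N : ℝ) ^ 3 := by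
  induction N with
  | zero => simp
  | succ n ih =>
    rw [Finset.sum_range_succ]; push_cast
    have : (0 : ℝ) ≤ n := n.cast_nonneg
    nlinarith

theorem aux_diff (N : ℕ) (hN : 0 < N) (x : Fin N → ℝ) (ν : ℝ) (n : Fin N) :
    gridTransform N ν x n - x n = (N : ℂ)⁻¹ * ((Fmat N 0)ᴴ *ᵥ (fun t =>
      (Complex.exp (Complex.I * ((2 * Real.pi * ((t : ℕ) : ℝ) * ν / N : ℝ) : ℂ)) - 1) *
        ((Fmat N 0) *ᵥ fun k => ((x k : ℝ) : ℂ)) t)) n := by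
  have hNc : (N : ℂ) ≠ 0 := by exact_mod_cast hN.ne'
  set X := (Fmat N 0) *ᵥ fun k => ((x k : ℝ) : ℂ) with hX
  have hx : ((x n : ℝ) : ℂ) = (N : ℂ)⁻¹ * ((Fmat N 0)ᴴ *ᵥ X) n := by
    rw [hX, Matrix.mulVec_mulVec, aux_orth_s11 N hN, Matrix.smul_mulVec, Matrix.one_mulVec]
    simp [hNc]
  rw [hx, gridTransform, Matrix.smul_mulVec, Pi.smul_apply, smul_eq_mul, ← mul_sub, ← hX]
  congr 1
  simp only [Matrix.mulVec, dotProduct]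
  rw [← Finset.sum_sub_distrib]
  refine Finset.sum_congr rfl fun t _ => ?_
  have : (Fmat N ν)ᴴ n t = (Fmat N 0)ᴴ n t *
      Complex.exp (Complex.I * ((2 * Real.pi * ((t : ℕ) : ℝ) * ν / N : ℝ) : ℂ)) := by
    simp only [Fmat, Matrix.conjTranspose_apply, Matrix.of_apply, Complex.star_def]
    rw [← Complex.exp_conj, ← Complex.exp_conj, ← Complex.exp_add]
    congr 1
    simp only [map_mul, Complex.conj_ofReal, Complex.conj_I]
    push_cast
    field_simp
    ring
  rw [this]; ring

theorem aux_main (N : ℕ) (hN : 0 < N) (x : Fin N → ℝ) (ν : ℝ) :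
    Real.sqrt (∑ n, ‖gridTransform N ν x n - x n‖ ^ 2)
        ≤ 2 * Real.pi / Real.sqrt 3 * |ν| * ∑ k, |x k| := by
  have hNr : (0 : ℝ) < N := by exact_mod_cast hN
  have hS : 0 ≤ ∑ k, |x k| := Finset.sum_nonneg fun _ _ => abs_nonneg _
  apply Real.sqrt_le_iff.2 ⟨by positivity, ?_⟩
  simp_rw [aux_diff N hN x ν, norm_mul, mul_pow]
  rw [← Finset.mul_sum, aux_parseval N hN]
  set S := ∑ k, |x k|
  have hb : ∀ t : Fin N, ‖(Complex.exp (Complex.I * ((2 * Real.pi * ((t : ℕ) : ℝ) * ν / N : ℝ) : ℂ))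
      - 1) * ((Fmat N 0) *ᵥ fun k => ((x k : ℝ) : ℂ)) t‖ ^ 2
      ≤ (2 * Real.pi * ν / N * S) ^ 2 * (((t : ℕ) : ℝ)) ^ 2 := by
    intro t
    have h1 := Real.norm_exp_I_mul_ofReal_sub_one_le (x := 2 * Real.pi * ((t : ℕ) : ℝ) * ν / N)
    have h2 : ‖((Fmat N 0) *ᵥ fun k => ((x k : ℝ) : ℂ)) t‖ ≤ S := by
      simp only [Matrix.mulVec, dotProduct]
      refine (norm_sum_le _ _).trans (Finset.sum_le_sum fun k _ => ?_)
      rw [norm_mul, Fmat, Matrix.of_apply, Complex.norm_exp_ofReal_mul_I, one_mul,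
        Complex.norm_real, Real.norm_eq_abs]
    rw [norm_mul]
    calc _ ≤ (‖2 * Real.pi * ((t : ℕ) : ℝ) * ν / N‖ * S) ^ 2 := by gcongr
      _ = _ := by
        rw [mul_pow, Real.norm_eq_abs, sq_abs]; ring
  have hsum := aux_sum N
  have h3 : (Real.sqrt 3) ^ 2 = 3 := Real.sq_sqrt (by norm_num)
  have hn : ‖(N : ℂ)⁻¹‖ = (N : ℝ)⁻¹ := by simp
  rw [hn]
  calc _ ≤ ((N : ℝ)⁻¹) ^ 2 * (N * ∑ t : Fin N, (2 * Real.pi * ν / N * S) ^ 2 * (((t : ℕ) : ℝ)) ^ 2) := by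
        gcongr with t _
        exact hb t
    _ = (2 * Real.pi * ν * S) ^ 2 / (3 * N ^ 3) * (3 * ∑ t ∈ Finset.range N, (t : ℝ) ^ 2) := by
        rw [← Finset.mul_sum, Fin.sum_univ_eq_sum_range (fun t => ((t : ℕ) : ℝ) ^ 2)]
        field_simp
    _ ≤ (2 * Real.pi * ν * S) ^ 2 / (3 * N ^ 3) * N ^ 3 := by gcongr
    _ = _ := by
        simp only [mul_pow, div_pow, h3, sq_abs]
        field_simp

/-- Writing `F_ν^{-1}(F x) = x^R + i x^I` with `x^R, x^I ∈ ℝ^N`, for `|ν| ≤ 1/2` one has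
`‖x^I‖₂ ≤ (2π/√3)|ν|‖x‖₁` and `‖x^R − x‖₂ ≤ (2π/√3)|ν|‖x‖₁`. -/
theorem gridTransform_close_to_x (N : ℕ) (hN : 0 < N) (x : Fin N → ℝ) (ν : ℝ)
    (hν : |ν| ≤ 1 / 2) :
    Real.sqrt (∑ n, ((gridTransform N ν x n).im)^2)
        ≤ 2 * Real.pi / Real.sqrt 3 * |ν| * ∑ k, |x k| ∧
    Real.sqrt (∑ n, ((gridTransform N ν x n).re - x n)^2)
        ≤ 2 * Real.pi / Real.sqrt 3 * |ν| * ∑ k, |x k| := by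
  have h := aux_main N hN x ν
  constructor
  · refine le_trans (Real.sqrt_le_sqrt (Finset.sum_le_sum fun n _ => ?_)) h
    have h1 := Complex.abs_im_le_norm (gridTransform N ν x n - x n)
    rw [Complex.sub_im, Complex.ofReal_im, sub_zero] at h1
    rw [← sq_abs]
    gcongr
  · refine le_trans (Real.sqrt_le_sqrt (Finset.sum_le_sum fun n _ => ?_)) h
    have h1 := Complex.abs_re_le_norm (gridTransform N ν x n - x n)
    rw [Complex.sub_re, Complex.ofReal_re] at h1
    rw [← sq_abs]
    gcongr
end

section
/- Let N ≥ 100 be an integer, x ∈ ℝ^N, and ν ∈ ℝ with 0 < |ν| ≤ 1/2, and set x^R := Re(F_ν^{−1}(F x)). Then the total mass of x^R outside the support of x satisfies Σ_{n ∈ {0,…,N−1} : x_n = 0} |x^R_n| ≤ π²·|ν|·(ln N)·‖x‖₁. -/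
open Matrix

lemma aux_sin (N : ℕ) (ν : ℝ) (hν : |ν| ≤ 1 / 2) (m : ℕ) (h1 : 1 ≤ m) (h2 : m < N) :
    1 ≤ ((N : ℝ) * Real.sin (Real.pi * ((m : ℝ) - ν) / N)) * (1 / (m : ℝ) + 1 / ((N : ℝ) - m)) := by
  have hN : (0 : ℝ) < N := by exact_mod_cast (by omega : 0 < N)
  have hm1 : (1 : ℝ) ≤ m := by exact_mod_cast h1
  have hm2 : (1 : ℝ) ≤ (N : ℝ) - m := by
    have : ((m + 1 : ℕ) : ℝ) ≤ N := by exact_mod_cast h2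
    push_cast at this; linarith
  obtain ⟨ha, hb⟩ := abs_le.mp hν
  have hpi := Real.pi_pos
  have p1 : 0 < 1 / (m : ℝ) := by positivity
  have p2 : 0 < 1 / ((N : ℝ) - m) := by apply one_div_pos.mpr; linarith
  have e1 : (m : ℝ) * (1 / m) = 1 := by field_simp
  have e2 : ((N : ℝ) - m) * (1 / ((N : ℝ) - m)) = 1 := mul_one_div_cancel (by linarith)
  rcases le_total (Real.pi * ((m : ℝ) - ν) / N) (Real.pi / 2) with h | h
  · have hs := Real.mul_le_sin (x := Real.pi * ((m : ℝ) - ν) / N)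
      (div_nonneg (mul_nonneg hpi.le (by linarith)) hN.le) h
    have : 2 * ((m : ℝ) - ν) ≤ N * Real.sin (Real.pi * ((m : ℝ) - ν) / N) := by
      calc 2 * ((m : ℝ) - ν) = N * (2 / Real.pi * (Real.pi * ((m : ℝ) - ν) / N)) := by
            field_simp
        _ ≤ _ := by gcongr
    have h3 : (m : ℝ) ≤ N * Real.sin (Real.pi * ((m : ℝ) - ν) / N) := by linarith
    nlinarith [mul_le_mul_of_nonneg_right h3 p1.le, mul_nonneg (by linarith : (0:ℝ) ≤ N * Real.sin (Real.pi * ((m : ℝ) - ν) / N)) p2.le]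
  · have e : Real.pi - Real.pi * ((m : ℝ) - ν) / N = Real.pi * ((N : ℝ) - m + ν) / N := by
      field_simp; ring
    have hs := Real.mul_le_sin (x := Real.pi - Real.pi * ((m : ℝ) - ν) / N)
      (by rw [e]; exact (div_nonneg (mul_nonneg hpi.le (by linarith)) hN.le)) (by linarith)
    rw [Real.sin_pi_sub, e] at hs
    have : 2 * ((N : ℝ) - m + ν) ≤ N * Real.sin (Real.pi * ((m : ℝ) - ν) / N) := by
      calc 2 * ((N : ℝ) - m + ν) = N * (2 / Real.pi * (Real.pi * ((N : ℝ) - m + ν) / N)) := by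
            field_simp
        _ ≤ _ := by gcongr
    have h3 : (N : ℝ) - m ≤ N * Real.sin (Real.pi * ((m : ℝ) - ν) / N) := by linarith
    nlinarith [mul_le_mul_of_nonneg_right h3 p2.le, mul_nonneg (by linarith : (0:ℝ) ≤ N * Real.sin (Real.pi * ((m : ℝ) - ν) / N)) p1.le]

lemma aux_geom (N : ℕ) (ν : ℝ) (hν : |ν| ≤ 1 / 2) (m : ℕ) (h1 : 1 ≤ m) (h2 : m < N) :
    ‖∑ t ∈ Finset.range N, Complex.exp (Complex.I * ((2 * Real.pi * (ν - m) / N : ℝ) : ℂ)) ^ t‖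
      ≤ N * (Real.pi * |ν| * (1 / (m : ℝ) + 1 / ((N : ℝ) - m))) := by
  have hN : (0 : ℝ) < N := by exact_mod_cast (by omega : 0 < N)
  have hs := aux_sin N ν hν m h1 h2
  set z := Complex.exp (Complex.I * ((2 * Real.pi * (ν - m) / N : ℝ) : ℂ)) with hz
  set B := 1 / (m : ℝ) + 1 / ((N : ℝ) - m) with hB
  have hBpos : 0 < B := by
    have hm1 : (1 : ℝ) ≤ m := by exact_mod_cast h1
    have hm2 : (0 : ℝ) < (N : ℝ) - m := by
      have : (m : ℝ) < N := by exact_mod_cast h2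
      linarith
    positivity
  have hg := congrArg norm (geom_sum_mul z N)
  rw [norm_mul] at hg
  have n1 : ‖z - 1‖ = 2 * |Real.sin (Real.pi * ((m : ℝ) - ν) / N)| := by
    rw [hz, Complex.norm_exp_I_mul_ofReal_sub_one,
      show 2 * Real.pi * (ν - m) / N / 2 = -(Real.pi * ((m : ℝ) - ν) / N) by ring, Real.sin_neg]
    simp
  have n2 : ‖z ^ N - 1‖ ≤ 2 * (Real.pi * |ν|) := by
    have : z ^ N = Complex.exp (Complex.I * ((2 * Real.pi * (ν - m) : ℝ) : ℂ)) := by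
      rw [hz, ← Complex.exp_nat_mul]
      congr 1
      have : (N : ℂ) ≠ 0 := by exact_mod_cast hN.ne'
      push_cast
      field_simp
    rw [this, Complex.norm_exp_I_mul_ofReal_sub_one,
      show 2 * Real.pi * (ν - m) / 2 = Real.pi * ν - m * Real.pi by ring, Real.sin_sub_nat_mul_pi]
    rw [norm_mul, norm_mul, norm_pow]
    simp only [norm_neg, norm_one, one_pow, one_mul, Real.norm_eq_abs, abs_two]
    have := Real.abs_sin_le_abs (x := Real.pi * ν)
    rw [abs_mul, abs_of_pos Real.pi_pos] at this
    linarith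
  set S := ‖∑ t ∈ Finset.range N, z ^ t‖
  have hS : 0 ≤ S := norm_nonneg _
  set s := Real.sin (Real.pi * ((m : ℝ) - ν) / N)
  have hss : s ≤ |s| := le_abs_self s
  rw [n1] at hg
  have h4 : S * |s| ≤ Real.pi * |ν| := by linarith
  calc S = S * 1 := by ring
    _ ≤ S * (N * |s| * B) := by
        gcongr
        refine hs.trans ?_
        gcongr
    _ = N * B * (S * |s|) := by ring
    _ ≤ N * B * (Real.pi * |ν|) := by gcongr
    _ = _ := by ring

lemma aux_re (N : ℕ) (ν : ℝ) (x : Fin N → ℝ) (n : Fin N) :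
    gridTransform N ν x n = ∑ k, (x k : ℂ) * ((N : ℂ)⁻¹ * ∑ t ∈ Finset.range N,
      Complex.exp (Complex.I * ((2 * Real.pi * (((n : ℕ) : ℝ) - ((k : ℕ) : ℝ) + ν) / N : ℝ) : ℂ)) ^ t) := by
  unfold gridTransform
  simp only [Matrix.smul_apply, smul_eq_mul, Matrix.mulVec, dotProduct,
    Matrix.conjTranspose_apply, Fmat, Matrix.of_apply, Finset.mul_sum]
  rw [Finset.sum_comm]
  refine Finset.sum_congr rfl fun k _ => ?_
  rw [Finset.sum_range]
  refine Finset.sum_congr rfl fun t _ => ?_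
  rw [← Complex.exp_nat_mul, Complex.star_def, ← Complex.exp_conj]
  have e : ∀ a b c d : ℂ, a * b * (c * d) = d * (a * (b * c)) := fun a b c d => by ring
  rw [e, ← Complex.exp_add]
  congr 3
  simp only [map_mul, Complex.conj_ofReal, Complex.conj_I]
  push_cast
  ring

lemma aux_kernel (N : ℕ) (ν : ℝ) (hν : |ν| ≤ 1 / 2) (n k : Fin N) (h : n ≠ k) :
    ‖(N : ℂ)⁻¹ * ∑ t ∈ Finset.range N,
      Complex.exp (Complex.I * ((2 * Real.pi * (((n : ℕ) : ℝ) - ((k : ℕ) : ℝ) + ν) / N : ℝ) : ℂ)) ^ t‖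
      ≤ Real.pi * |ν| * (1 / (((k - n : Fin N) : ℕ) : ℝ) + 1 / ((N : ℝ) - ((k - n : Fin N) : ℕ))) := by
  have hN0 : 0 < N := by have := n.2; omega
  have hN : (0 : ℝ) < N := by exact_mod_cast hN0
  have hNC : (N : ℂ) ≠ 0 := by exact_mod_cast hN.ne'
  have hne : (n : ℕ) ≠ k := fun h' => h (Fin.ext h')
  have hm1 : 1 ≤ ((k - n : Fin N) : ℕ) := by
    rcases lt_or_ge k n with h' | h'
    · rw [Fin.coe_sub_iff_lt.mpr h']; have := n.2; omega
    · rw [Fin.coe_sub_iff_le.mpr h']; have : (n:ℕ) ≤ k := h'; omega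
  have hg := aux_geom N ν hν _ hm1 (k - n).2
  have hz : Complex.exp (Complex.I * ((2 * Real.pi * (((n : ℕ) : ℝ) - ((k : ℕ) : ℝ) + ν) / N : ℝ) : ℂ))
      = Complex.exp (Complex.I * ((2 * Real.pi * (ν - ((k - n : Fin N) : ℕ)) / N : ℝ) : ℂ)) := by
    rcases lt_or_ge k n with h' | h'
    · rw [Fin.coe_sub_iff_lt.mpr h', Nat.cast_sub (by have := n.2; omega)]
      symm
      rw [← Complex.exp_periodic]
      congr 1
      push_cast
      field_simp
      ring
    · rw [Fin.coe_sub_iff_le.mpr h', Nat.cast_sub h']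
      congr 3
      ring
  rw [hz, norm_mul, norm_inv, Complex.norm_natCast]
  rw [inv_mul_le_iff₀ hN]
  exact hg

lemma aux_sum_s12 (N : ℕ) (hN : 100 ≤ N) :
    ∑ m : Fin N, (1 / ((m : ℕ) : ℝ) + 1 / ((N : ℝ) - (m : ℕ))) ≤ Real.pi * Real.log N := by
  have hH := harmonic_le_one_add_log N
  have hE : ((harmonic N : ℚ) : ℝ) = ∑ i ∈ Finset.range N, 1 / ((i : ℝ) + 1) := by
    simp [harmonic]
  rw [hE] at hH
  have h1 : ∑ m ∈ Finset.range N, 1 / (m : ℝ) ≤ ∑ i ∈ Finset.range N, 1 / ((i : ℝ) + 1) := by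
    obtain ⟨M, rfl⟩ : ∃ M, N = M + 1 := ⟨N - 1, by omega⟩
    rw [Finset.sum_range_succ', Finset.sum_range_succ]
    push_cast
    simp only [div_zero, add_zero]
    have : 0 ≤ 1 / ((M : ℝ) + 1) := by positivity
    linarith
  have h2 : ∑ m ∈ Finset.range N, 1 / ((N : ℝ) - m) = ∑ i ∈ Finset.range N, 1 / ((i : ℝ) + 1) := by
    rw [← Finset.sum_range_reflect]
    refine Finset.sum_congr rfl fun j hj => ?_
    have := Finset.mem_range.mp hj
    rw [Nat.sub_sub, Nat.cast_sub (by omega)]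
    push_cast
    congr 1
    ring
  have h3 : (4 : ℝ) ≤ Real.log N := by
    have : Real.exp 4 ≤ N := by
      have h5 : Real.exp 4 = Real.exp 1 ^ 4 := by rw [← Real.exp_nat_mul]; norm_num
      have h6 : Real.exp 1 ^ 4 ≤ 2.72 ^ 4 := by
        gcongr
        have := Real.exp_one_lt_d9
        linarith
      have h7 : (100 : ℝ) ≤ N := by exact_mod_cast hN
      rw [h5]
      norm_num at h6 ⊢
      linarith
    rw [Real.le_log_iff_exp_le (by have : (100 : ℝ) ≤ N := by exact_mod_cast hN
                                   linarith)]
    exact this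
  rw [Fin.sum_univ_eq_sum_range (fun m => 1 / (m : ℝ) + 1 / ((N : ℝ) - m)) N,
    Finset.sum_add_distrib, h2]
  nlinarith [Real.pi_gt_three]

/-- For `N ≥ 100`, `0 < |ν| ≤ 1/2`, and `x^R = Re(F_ν^{-1}(F x))`, the mass of `x^R` outside
the support of `x` satisfies `∑_{n : x_n = 0} |x^R_n| ≤ π²|ν| (ln N) ‖x‖₁`. -/
theorem gridTransform_offsupport_mass (N : ℕ) (hN : 100 ≤ N) (x : Fin N → ℝ) (ν : ℝ)
    (hν0 : 0 < |ν|) (hν : |ν| ≤ 1 / 2) :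
    ∑ n ∈ Finset.univ.filter (fun n : Fin N => x n = 0), |(gridTransform N ν x n).re|
      ≤ Real.pi ^ 2 * |ν| * Real.log N * ∑ k, |x k| := by
  have : NeZero N := ⟨by omega⟩
  set g : Fin N → ℝ := fun m => 1 / ((m : ℕ) : ℝ) + 1 / ((N : ℝ) - (m : ℕ)) with hg
  have hgpos : ∀ m, 0 ≤ g m := fun m => by
    have : ((m : ℕ) : ℝ) < N := by exact_mod_cast m.2
    have : 0 < (N : ℝ) - (m : ℕ) := by linarith
    simp only [hg]
    positivity
  have hpi := Real.pi_pos
  have key : ∀ n : Fin N, x n = 0 →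
      |(gridTransform N ν x n).re| ≤ ∑ k, |x k| * (Real.pi * |ν| * g (k - n)) := by
    intro n hn
    refine (Complex.abs_re_le_norm _).trans ?_
    rw [aux_re]
    refine (norm_sum_le _ _).trans (Finset.sum_le_sum fun k _ => ?_)
    rw [norm_mul, Complex.norm_real, Real.norm_eq_abs]
    by_cases h : n = k
    · subst h; simp [hn]
    · gcongr
      exact aux_kernel N ν hν n k h
  calc _ ≤ ∑ n ∈ Finset.univ.filter (fun n : Fin N => x n = 0),
          ∑ k, |x k| * (Real.pi * |ν| * g (k - n)) :=
        Finset.sum_le_sum fun n hn => key n (Finset.mem_filter.mp hn).2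
    _ ≤ ∑ n, ∑ k, |x k| * (Real.pi * |ν| * g (k - n)) := by
        refine Finset.sum_le_sum_of_subset_of_nonneg (Finset.filter_subset _ _) fun n _ _ => ?_
        refine Finset.sum_nonneg fun k _ => ?_
        have := hgpos (k - n)
        positivity
    _ = ∑ k, |x k| * (Real.pi * |ν| * ∑ m, g m) := by
        rw [Finset.sum_comm]
        refine Finset.sum_congr rfl fun k _ => ?_
        rw [← Finset.mul_sum, ← Finset.mul_sum, ← Equiv.sum_comp (Equiv.subLeft k) g]
        rfl
    _ ≤ ∑ k, |x k| * (Real.pi * |ν| * (Real.pi * Real.log N)) := by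
        gcongr
        exact aux_sum_s12 N hN
    _ = _ := by rw [← Finset.sum_mul]; ring
end

section
/- Let N be a positive integer, ν ∈ ℝ, and let x ∈ ℝ^N have nonnegative entries. Set x^I := Im(F_ν^{−1}(F x)). Then ‖x^I‖₂² = sin²(πν)·(‖x‖₂² − ‖x‖₁²/N). -/
open Matrix

lemma Fmat_neg (N : ℕ) [NeZero N] (ν : ℝ) (t k : Fin N) (ht : t ≠ 0) :
    Fmat N ν (-t) k = Complex.exp (((-(2 * Real.pi * ν) : ℝ) : ℂ) * Complex.I)
      * star (Fmat N ν t k) := by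
  have hN : (N : ℂ) ≠ 0 := Nat.cast_ne_zero.mpr (NeZero.ne N)
  have hv : (((-t : Fin N) : ℕ) : ℂ) = (N : ℂ) - ((t : ℕ) : ℂ) := by
    have h1 : ((-t : Fin N) : ℕ) = N - t := by
      rw [Fin.val_neg, if_neg ht]
    rw [h1, Nat.cast_sub t.2.le]
  simp only [Fmat, Matrix.of_apply, Complex.star_def, ← Complex.exp_conj, map_mul,
    Complex.conj_ofReal, Complex.conj_I]
  rw [← Complex.exp_add, Complex.exp_eq_exp_iff_exists_int]
  refine ⟨-(k : ℕ), ?_⟩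
  push_cast
  rw [hv]
  field_simp
  ring

lemma Fmat_mul_star (N : ℕ) (hN : 0 < N) (ν : ℝ) :
    Fmat N ν * (Fmat N ν)ᴴ = (N : ℂ) • (1 : Matrix (Fin N) (Fin N) ℂ) := by
  have hN' : (N : ℂ) ≠ 0 := Nat.cast_ne_zero.mpr hN.ne'
  ext s t
  rw [Matrix.mul_apply]
  simp only [Matrix.conjTranspose_apply, Fmat, Matrix.of_apply, Complex.star_def,
    ← Complex.exp_conj, map_mul, Complex.conj_ofReal, Complex.conj_I, ← Complex.exp_add]
  by_cases h : s = t
  · subst h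
    simp
  · rw [Matrix.smul_apply, Matrix.one_apply_ne h, smul_zero]
    set r : ℂ := Complex.exp (2 * Real.pi * Complex.I * (((t : ℕ) : ℂ) - ((s : ℕ) : ℂ)) / N)
      with hr
    set c : ℂ := Complex.exp (2 * Real.pi * Complex.I * (((t : ℕ) : ℂ) - ((s : ℕ) : ℂ)) * ν / N)
    have h1 : ∀ k : Fin N, Complex.exp
        (((-(2 * Real.pi * ((s : ℕ) : ℝ) * (((k : ℕ) : ℝ) + ν) / (N : ℝ)) : ℝ) : ℂ) * Complex.I
        + ((-(2 * Real.pi * ((t : ℕ) : ℝ) * (((k : ℕ) : ℝ) + ν) / (N : ℝ)) : ℝ) : ℂ)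
          * -Complex.I) = c * r ^ (k : ℕ) := by
      intro k
      rw [← Complex.exp_nat_mul, ← Complex.exp_add]
      congr 1
      push_cast
      field_simp
      ring
    rw [Finset.sum_congr rfl (fun k _ => h1 k), ← Finset.mul_sum,
      Fin.sum_univ_eq_sum_range (fun k => r ^ k)]
    have hrN : r ^ N = 1 := by
      rw [← Complex.exp_nat_mul, Complex.exp_eq_one_iff]
      refine ⟨(t : ℕ) - (s : ℕ), ?_⟩
      push_cast
      field_simp
    have hr1 : r ≠ 1 := by
      intro h
      rw [hr, Complex.exp_eq_one_iff] at h
      obtain ⟨m, hm⟩ := h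
      have hpi : (Real.pi : ℂ) ≠ 0 := by exact_mod_cast Real.pi_ne_zero
      have h2 : (((t : ℕ) : ℂ) - ((s : ℕ) : ℂ)) = m * N := by
        have hI := Complex.I_ne_zero
        field_simp at hm
        rw [hm, mul_comm]
      have h3 : (((t : ℕ) : ℤ) - ((s : ℕ) : ℤ)) = m * N := by exact_mod_cast h2
      have hs := s.2
      have ht := t.2
      have hm0 : m = 0 := by
        by_contra hm0
        rcases lt_or_gt_of_ne hm0 with h | h <;> nlinarith
      subst hm0
      apply h
      ext
      omega
    rw [geom_sum_eq hr1, hrN]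
    simp

lemma star_mul_Fmat (N : ℕ) (hN : 0 < N) (ν : ℝ) :
    (Fmat N ν)ᴴ * Fmat N ν = (N : ℂ) • (1 : Matrix (Fin N) (Fin N) ℂ) := by
  have hN' : (N : ℂ) ≠ 0 := Nat.cast_ne_zero.mpr hN.ne'
  have h : ((N : ℂ)⁻¹ • Fmat N ν) * (Fmat N ν)ᴴ = 1 := by
    rw [Matrix.smul_mul, Fmat_mul_star N hN, smul_smul, inv_mul_cancel₀ hN', one_smul]
  rw [mul_eq_one_comm, Matrix.mul_smul] at h
  rw [← h, smul_smul, mul_inv_cancel₀ hN', one_smul]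

lemma parseval_aux_s13 (N : ℕ) (A : Matrix (Fin N) (Fin N) ℂ)
    (hA : Aᴴ * A = (N : ℂ) • (1 : Matrix (Fin N) (Fin N) ℂ)) (z : Fin N → ℂ) :
    ∑ n, Complex.normSq ((A *ᵥ z) n) = N * ∑ n, Complex.normSq (z n) := by
  have key : ∀ v : Fin N → ℂ, ((∑ n, Complex.normSq (v n) : ℝ) : ℂ) = star v ⬝ᵥ v := by
    intro v
    simp [dotProduct, Complex.normSq_eq_conj_mul_self]
  have : ((∑ n, Complex.normSq ((A *ᵥ z) n) : ℝ) : ℂ)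
      = ((N * ∑ n, Complex.normSq (z n) : ℝ) : ℂ) := by
    rw [Complex.ofReal_mul, key, key, Matrix.star_mulVec, ← Matrix.dotProduct_mulVec,
      Matrix.mulVec_mulVec, hA, Matrix.smul_mulVec, Matrix.one_mulVec, dotProduct_smul]
    simp
  exact_mod_cast this

lemma im_sq_aux (ν : ℝ) (w : ℂ)
    (h : star w = Complex.exp (((-(2 * Real.pi * ν) : ℝ) : ℂ) * Complex.I) * w) :
    w.im ^ 2 = Real.sin (Real.pi * ν) ^ 2 * Complex.normSq w := by
  have h1 := congrArg Complex.re h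
  have h2 := congrArg Complex.im h
  have e : -(2 * Real.pi * ν) = -(2 * (Real.pi * ν)) := by ring
  simp only [Complex.star_def, Complex.conj_re, Complex.conj_im, Complex.mul_re, Complex.mul_im,
    Complex.exp_ofReal_mul_I_re, Complex.exp_ofReal_mul_I_im, e, Real.cos_neg, Real.sin_neg,
    Real.cos_two_mul, Real.sin_two_mul] at h1 h2
  rw [Complex.normSq_apply]
  have h3 := Real.sin_sq_add_cos_sq (Real.pi * ν)
  generalize Real.sin (Real.pi * ν) = s at *
  generalize Real.cos (Real.pi * ν) = c at *
  generalize w.re = a at *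
  generalize w.im = b at *
  have h4 : s * (s * a) = s * (c * b) := by linear_combination h1 / 2 + a * h3
  have h5 : c * (s * a) = c * (c * b) := by linear_combination h2 / 2
  have h6 : s * a = c * b := by
    linear_combination s * h4 + c * h5 - (s * a - c * b) * h3
  linear_combination - (s * a + c * b) * h6 - b ^ 2 * h3

/-- For nonnegative `x ∈ ℝ^N` and `x^I = Im(F_ν^{-1}(F x))`,
`‖x^I‖₂² = sin²(πν)(‖x‖₂² − ‖x‖₁²/N)`. -/
theorem gridTransform_im_norm_sq (N : ℕ) (hN : 0 < N) (ν : ℝ) (x : Fin N → ℝ)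
    (hx : ∀ n, 0 ≤ x n) :
    ∑ n, ((gridTransform N ν x n).im)^2
      = (Real.sin (Real.pi * ν))^2 * (∑ n, (x n)^2 - (∑ n, |x n|)^2 / (N : ℝ)) := by
  have : NeZero N := ⟨hN.ne'⟩
  have hNr : (N : ℝ) ≠ 0 := Nat.cast_ne_zero.mpr hN.ne'
  simp only [abs_of_nonneg (hx _)]
  set X : Fin N → ℂ := (Fmat N 0) *ᵥ fun k => ((x k : ℝ) : ℂ) with hX
  set Z : Fin N → ℂ := fun t => if t = 0 then 0 else X t with hZ
  set w : Fin N → ℂ := (Fmat N ν)ᴴ *ᵥ Z with hw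
  have hX0 : X 0 = ((∑ n, x n : ℝ) : ℂ) := by
    simp [hX, Matrix.mulVec, dotProduct, Fmat]
  have hXZ : X = Z + Pi.single 0 (X 0) := by
    ext t
    by_cases h : t = 0
    · subst h; simp [hZ]
    · simp [hZ, h]
  have hy : ∀ n, gridTransform N ν x n = (N : ℂ)⁻¹ * (w n + ((∑ n, x n : ℝ) : ℂ)) := by
    intro n
    have : gridTransform N ν x = (N : ℂ)⁻¹ • ((Fmat N ν)ᴴ *ᵥ X) := by
      rw [gridTransform, Matrix.smul_mulVec]
    rw [this, hXZ, Matrix.mulVec_add, hX0, Matrix.mulVec_single]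
    simp [hw, Fmat]
  have him : ∀ n, (gridTransform N ν x n).im = (w n).im / N := by
    intro n
    rw [hy, ← Complex.ofReal_natCast, ← Complex.ofReal_inv, Complex.im_ofReal_mul,
      Complex.add_im, Complex.ofReal_im, add_zero]
    field_simp
  have hXneg : ∀ t : Fin N, t ≠ 0 → X (-t) = star (X t) := by
    intro t ht
    simp only [hX, Matrix.mulVec, dotProduct, star_sum]
    refine Finset.sum_congr rfl fun k _ => ?_
    rw [Fmat_neg N 0 t k ht]
    simp
  have hstar : ∀ n, star (w n)
      = Complex.exp (((-(2 * Real.pi * ν) : ℝ) : ℂ) * Complex.I) * w n := by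
    intro n
    simp only [hw, Matrix.mulVec, dotProduct, star_sum, Matrix.conjTranspose_apply,
      Finset.mul_sum]
    rw [← Equiv.sum_comp (Equiv.neg (Fin N))]
    refine Finset.sum_congr rfl fun t _ => ?_
    by_cases h : t = 0
    · subst h; simp [hZ]
    · simp only [Equiv.neg_apply, hZ, neg_eq_zero, h, if_false, star_mul', star_star,
        hXneg t h, Fmat_neg N ν t n h]
      ring
  have hP1 : ∑ n, Complex.normSq (w n) = N * ∑ n, Complex.normSq (Z n) :=
    parseval_aux_s13 N _ (by rw [Matrix.conjTranspose_conjTranspose]; exact Fmat_mul_star N hN ν) Z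
  have hP2 : ∑ n, Complex.normSq (X n) = N * ∑ n, (x n) ^ 2 := by
    rw [hX, parseval_aux_s13 N _ (star_mul_Fmat N hN 0)]
    simp [Complex.normSq_ofReal, sq]
  have hZX : ∑ n, Complex.normSq (Z n) = ∑ n, Complex.normSq (X n) - (∑ n, x n) ^ 2 := by
    have h0 : (∑ n, x n) ^ 2 = Complex.normSq (X 0) := by
      rw [hX0, Complex.normSq_ofReal, sq]
    rw [h0, eq_sub_iff_add_eq, ← Finset.sum_erase_add _ _ (Finset.mem_univ (0 : Fin N)),
      ← Finset.sum_erase_add _ (fun n => Complex.normSq (X n))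
        (Finset.mem_univ (0 : Fin N))]
    have : ∑ n ∈ Finset.univ.erase (0 : Fin N), Complex.normSq (Z n)
        = ∑ n ∈ Finset.univ.erase (0 : Fin N), Complex.normSq (X n) := by
      refine Finset.sum_congr rfl fun t ht => ?_
      simp [hZ, Finset.ne_of_mem_erase ht]
    rw [this]
    simp [hZ]
  simp only [him, div_pow, im_sq_aux ν _ (hstar _)]
  rw [← Finset.sum_div, ← Finset.mul_sum, hP1, hZX, hP2]
  field_simp
end

section
/- Let N ≥ 100 be an integer and let 𝓕 = 𝓕_dom ⊔ 𝓕_res be a finite set of frequencies with positive amplitudes p_f, where each f ∈ 𝓕 is written f = (n_f + ν_f)/N with n_f ∈ {0,…,N−1} and |ν_f| ≤ 1/2, and the integers {n_f : f ∈ 𝓕_dom} are pairwise distinct. Let y ∈ ℂ^N with y_t = Σ_{f∈𝓕} p_f·exp(−2πi·f·t) for t = 0,…,N−1, set x_on := Re(F^{−1}y), and set R := Σ_{f∈𝓕_dom} p_f·|ν_f| + Σ_{f∈𝓕_res} p_f. Then for every f ∈ 𝓕_dom one has |x_on,n_f − p_f| ≤ 4R, and for every n ∈ {0,…,N−1} with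 n ∉ {n_f : f ∈ 𝓕_dom} one has |x_on,n| ≤ 4R. -/
open Matrix

/-- `F^{-1} y = (1/N) F^* y`. -/
noncomputable def invF (N : ℕ) (y : Fin N → ℂ) : Fin N → ℂ :=
  (((N : ℂ))⁻¹ • (Fmat N 0)ᴴ) *ᵥ y


noncomputable def DK (N : ℕ) (x : ℝ) : ℂ :=
  (N : ℂ)⁻¹ * ∑ t : Fin N, Complex.exp (((2 * Real.pi * ((t : ℕ) : ℝ) * x / (N : ℝ)) : ℝ) * Complex.I)

lemma DK_norm_le (N : ℕ) (hN : 0 < N) (x : ℝ) : ‖DK N x‖ ≤ 1 := by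
  have hN' : (0 : ℝ) < N := by exact_mod_cast hN
  unfold DK
  rw [norm_mul, norm_inv, Complex.norm_natCast, inv_mul_le_iff₀ hN', mul_one]
  refine (norm_sum_le _ _).trans ?_
  simp only [Complex.norm_exp_ofReal_mul_I]
  simp

lemma DK_int (N : ℕ) (hN : 0 < N) (n k : ℕ) (hn : n < N) (hk : k < N) :
    DK N ((n : ℝ) - k) = if k = n then 1 else 0 := by
  have hN' : (N : ℂ) ≠ 0 := by exact_mod_cast hN.ne'
  unfold DK
  split_ifs with h
  · subst h
    simp [hN']
  · set w : ℂ := Complex.exp (2 * Real.pi * Complex.I * (((n : ℂ) - k) / N)) with hw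
    have h1 : ∀ t : Fin N, Complex.exp (((2 * Real.pi * ((t : ℕ) : ℝ) * ((n : ℝ) - k) / (N : ℝ)) : ℝ) * Complex.I) = w ^ (t : ℕ) := by
      intro t
      rw [hw, ← Complex.exp_nat_mul]
      congr 1
      push_cast
      ring
    rw [Finset.sum_congr rfl (fun t _ => h1 t), Fin.sum_univ_eq_sum_range (fun t => w ^ t)]
    have hwN : w ^ N = 1 := by
      rw [hw, ← Complex.exp_nat_mul, Complex.exp_eq_one_iff]
      refine ⟨(n : ℤ) - k, ?_⟩
      push_cast
      field_simp
    have hw1 : w ≠ 1 := by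
      intro h0
      rw [hw, Complex.exp_eq_one_iff] at h0
      obtain ⟨m, hm⟩ := h0
      have h2 : (2 * Real.pi * Complex.I : ℂ) ≠ 0 := Complex.two_pi_I_ne_zero
      have h3 : ((n : ℂ) - k) / N = m := by
        apply mul_left_cancel₀ h2
        rw [hm]; ring
      rw [div_eq_iff hN'] at h3
      have h4 : (n : ℤ) - k = m * N := by exact_mod_cast h3
      have h5 : (N : ℤ) ∣ (n : ℤ) - k := ⟨m, by rw [h4]; ring⟩
      have h6 : (n : ℤ) - k = 0 := by
        apply Int.eq_zero_of_abs_lt_dvd h5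
        rw [abs_lt]; omega
      omega
    rw [geom_sum_eq hw1, hwN]
    simp

lemma DK_diff (N : ℕ) (hN : 0 < N) (x ν : ℝ) : ‖DK N (x - ν) - DK N x‖ ≤ 4 * |ν| := by
  have hN' : (0 : ℝ) < N := by exact_mod_cast hN
  unfold DK
  rw [← mul_sub, ← Finset.sum_sub_distrib, norm_mul, norm_inv, Complex.norm_natCast,
    inv_mul_le_iff₀ hN']
  have hterm : ∀ t : Fin N, ‖Complex.exp (((2 * Real.pi * ((t : ℕ) : ℝ) * (x - ν) / (N : ℝ)) : ℝ) * Complex.I)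
      - Complex.exp (((2 * Real.pi * ((t : ℕ) : ℝ) * x / (N : ℝ)) : ℝ) * Complex.I)‖
      ≤ 2 * Real.pi * |ν| / N * ((t : ℕ) : ℝ) := by
    intro t
    have e : Complex.exp (((2 * Real.pi * ((t : ℕ) : ℝ) * (x - ν) / (N : ℝ)) : ℝ) * Complex.I)
      - Complex.exp (((2 * Real.pi * ((t : ℕ) : ℝ) * x / (N : ℝ)) : ℝ) * Complex.I)
      = Complex.exp (((2 * Real.pi * ((t : ℕ) : ℝ) * x / (N : ℝ)) : ℝ) * Complex.I) *
        (Complex.exp (Complex.I * ((-(2 * Real.pi * ((t : ℕ) : ℝ) * ν / (N : ℝ)) : ℝ) : ℂ)) - 1) := by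
      rw [mul_sub (Complex.exp _), ← Complex.exp_add, mul_one]
      congr 2
      push_cast
      ring
    rw [e, norm_mul, Complex.norm_exp_ofReal_mul_I, one_mul]
    refine (Real.norm_exp_I_mul_ofReal_sub_one_le).trans (le_of_eq ?_)
    rw [Real.norm_eq_abs, abs_neg, abs_div, abs_mul, abs_of_pos hN',
      abs_of_nonneg (by positivity : 0 ≤ 2 * Real.pi * ((t : ℕ) : ℝ))]
    ring
  refine (norm_sum_le _ _).trans ((Finset.sum_le_sum fun t _ => hterm t).trans ?_)
  rw [← Finset.mul_sum, Fin.sum_univ_eq_sum_range (fun t => (t : ℝ))]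
  have hs : ∑ t ∈ Finset.range N, (t : ℝ) ≤ N * N / 2 := by
    have := Finset.sum_range_id_mul_two N
    have h2 : (∑ t ∈ Finset.range N, (t : ℝ)) * 2 ≤ N * N := by
      have : (∑ t ∈ Finset.range N, t) * 2 ≤ N * N := by
        rw [this]; exact Nat.mul_le_mul_left _ (Nat.sub_le _ _)
      have h3 : (((∑ t ∈ Finset.range N, t) * 2 : ℕ) : ℝ) ≤ ((N * N : ℕ) : ℝ) := Nat.cast_le.2 this
      push_cast at h3
      exact h3
    linarith
  calc 2 * Real.pi * |ν| / N * ∑ t ∈ Finset.range N, (t : ℝ)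
      ≤ 2 * Real.pi * |ν| / N * (N * N / 2) := by gcongr
    _ = N * (Real.pi * |ν|) := by field_simp
    _ ≤ N * (4 * |ν|) := by gcongr; exact Real.pi_le_four

/-- For `N ≥ 100` and a signal with frequencies `f_i = (n_i + ν_i)/N` (`𝓕 = 𝓕_dom ⊔ 𝓕_res`,
positive amplitudes, the `n_i` pairwise distinct on `𝓕_dom`), the real part `x_on = Re(F⁻¹y)`
satisfies `|x_on,n_f − p_f| ≤ 4R` for `f ∈ 𝓕_dom` and `|x_on,n| ≤ 4R` off the dominant grid
points, where `R = ∑_{f∈𝓕_dom} p_f |ν_f| + ∑_{f∈𝓕_res} p_f`. -/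
theorem xOn_dominant_recovery (N : ℕ) (hN : 100 ≤ N)
    (ι : Type) [Fintype ι] [DecidableEq ι] (dom res : Finset ι)
    (hdisj : Disjoint dom res) (hcover : dom ∪ res = Finset.univ)
    (nf : ι → ℕ) (hnf : ∀ i, nf i < N)
    (νf : ι → ℝ) (hνf : ∀ i, |νf i| ≤ 1 / 2)
    (p : ι → ℝ) (hp : ∀ i, 0 < p i)
    (hinj : ∀ i ∈ dom, ∀ j ∈ dom, nf i = nf j → i = j)
    (f : ι → ℝ) (hf : ∀ i, f i = ((nf i : ℝ) + νf i) / (N : ℝ))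
    (y : Fin N → ℂ)
    (hy : ∀ t : Fin N, y t = ∑ i, (p i : ℂ) *
        Complex.exp (((-(2 * Real.pi * f i * ((t : ℕ) : ℝ))) : ℝ) * Complex.I))
    (R : ℝ) (hR : R = ∑ i ∈ dom, p i * |νf i| + ∑ i ∈ res, p i) :
    (∀ i ∈ dom, |(invF N y ⟨nf i, hnf i⟩).re - p i| ≤ 4 * R) ∧
    (∀ n : Fin N, (∀ i ∈ dom, nf i ≠ (n : ℕ)) → |(invF N y n).re| ≤ 4 * R) := by
  have hN0 : 0 < N := by omega
  have hNr : (N : ℝ) ≠ 0 := by exact_mod_cast hN0.ne'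
  have key : ∀ n : Fin N, invF N y n = ∑ i, (p i : ℂ) * DK N ((n : ℕ) - (nf i : ℝ) - νf i) := by
    intro n
    simp only [invF, Matrix.smul_apply, smul_eq_mul, Matrix.mulVec, dotProduct,
      Matrix.conjTranspose_apply, DK, hy, Finset.mul_sum]
    rw [Finset.sum_comm]
    refine Finset.sum_congr rfl fun i _ => Finset.sum_congr rfl fun t _ => ?_
    have : star (Fmat N 0 t n) * Complex.exp (((-(2 * Real.pi * f i * ((t : ℕ) : ℝ))) : ℝ) * Complex.I)
      = Complex.exp (((2 * Real.pi * ((t : ℕ) : ℝ) * ((n : ℕ) - (nf i : ℝ) - νf i) / (N : ℝ)) : ℝ) * Complex.I) := by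
      rw [Fmat, Matrix.of_apply, Complex.star_def, ← Complex.exp_conj, ← Complex.exp_add, map_mul,
        Complex.conj_ofReal, Complex.conj_I, hf]
      congr 1
      push_cast
      ring
    rw [← this]
    ring
  have main : ∀ n : Fin N,
      ‖invF N y n - ∑ i ∈ dom, (p i : ℂ) * (if nf i = n then 1 else 0)‖ ≤ 4 * R := by
    intro n
    rw [key, ← hcover, Finset.sum_union hdisj, add_sub_right_comm, ← Finset.sum_sub_distrib]
    refine (norm_add_le _ _).trans ?_
    rw [hR, mul_add, Finset.mul_sum]
    refine add_le_add ?_ ?_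
    · refine (norm_sum_le _ _).trans (Finset.sum_le_sum fun i _ => ?_)
      rw [← mul_sub, norm_mul, Complex.norm_real, Real.norm_of_nonneg (hp i).le,
        ← DK_int N hN0 n (nf i) n.2 (hnf i)]
      have := mul_le_mul_of_nonneg_left (DK_diff N hN0 ((n : ℕ) - (nf i : ℝ)) (νf i)) (hp i).le
      linarith
    · have h0 : 0 ≤ ∑ i ∈ res, p i := Finset.sum_nonneg fun i _ => (hp i).le
      have : ‖∑ i ∈ res, (p i : ℂ) * DK N ((n : ℕ) - (nf i : ℝ) - νf i)‖ ≤ ∑ i ∈ res, p i := by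
        refine (norm_sum_le _ _).trans (Finset.sum_le_sum fun i _ => ?_)
        rw [norm_mul, Complex.norm_real, Real.norm_of_nonneg (hp i).le]
        exact mul_le_of_le_one_right (hp i).le (DK_norm_le N hN0 _)
      linarith
  constructor
  · intro i hi
    have h := main ⟨nf i, hnf i⟩
    have e : ∑ j ∈ dom, (p j : ℂ) * (if nf j = nf i then 1 else 0) = (p i : ℂ) := by
      rw [Finset.sum_eq_single_of_mem i hi]
      · simp
      · intro j hj hji
        rw [if_neg (fun h => hji (hinj j hj i hi h)), mul_zero]
    simp only [e] at h
    have h2 := (Complex.abs_re_le_norm _).trans h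
    simpa using h2
  · intro n hn
    have h := main n
    have e : ∑ j ∈ dom, (p j : ℂ) * (if nf j = (n : ℕ) then 1 else 0) = 0 :=
      Finset.sum_eq_zero fun j hj => by rw [if_neg (hn j hj), mul_zero]
    rw [e, sub_zero] at h
    exact (Complex.abs_re_le_norm _).trans h
end
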